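/- There exists a universal constant C_b > 0 (used in the penalty of VI-LCB-Game) such that for γ ∈ [1/2,1) and δ ∈ (0,1), with probability at least 1−δ over the dataset, the output of Algorithm VI-LCB-Game satisfies, entrywise over 𝒮: V_pe^− ≥ r^{μ*,ν₀} + γ·P^{μ*,ν₀}·V_pe^− − 2·β^{μ*,ν₀}, where μ* is the max-player policy from a fixed Nash equilibrium (μ*,ν*) of the true game, ν₀ is any deterministic policy with ν₀(s) attaining min_{ν_s∈Δ(ℬ)} Σ_{a,b} μ*(a|s)ν_s(b) Q_pe^−(s,a,b) for each s, and β^{μ*,ν₀}(s) = Σ_{a,b} μ*(a|s)ν₀(b|s)·β(s,a,b; V_pe^−). -/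

import Mathlib

open scoped BigOperators ENNReal Classical

noncomputable section

namespace ZSMG

variable {𝒮 𝒜 ℬ : Type} [Fintype 𝒮] [Fintype 𝒜] [Fintype ℬ]
  [DecidableEq 𝒮] [DecidableEq 𝒜] [DecidableEq ℬ]

/-- Expectation of `V : 𝒮 → ℝ` under the (sub)probability vector `p`. -/
def Pexp (p V : 𝒮 → ℝ) : ℝ := ∑ s', p s' * V s'

/-- Variance of `V` under `p`: `Var_p(V) = p(V∘V) − (pV)²`. -/
def varP (p V : 𝒮 → ℝ) : ℝ := Pexp p (fun s => V s * V s) - (Pexp p V) ^ 2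

/-- Payoff of mixed strategies `w, z` in the matrix game `M`. -/
def pay (M : 𝒜 → ℬ → ℝ) (w : 𝒜 → ℝ) (z : ℬ → ℝ) : ℝ :=
  ∑ a, ∑ b, w a * z b * M a b

/-- Value function associated with a Q-function: minimax value at each state. -/
def valQ (Q : 𝒮 → 𝒜 → ℬ → ℝ) (s : 𝒮) : ℝ :=
  ⨆ w : stdSimplex ℝ 𝒜, ⨅ z : stdSimplex ℝ ℬ, pay (Q s) w.1 z.1

/-- Sup norm over states. -/
def supNormS (f : 𝒮 → ℝ) : ℝ := ⨆ s, |f s|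

/-- Sup norm over state-action triples. -/
def supNormQ (f : 𝒮 → 𝒜 → ℬ → ℝ) : ℝ := ⨆ s, ⨆ a, ⨆ b, |f s a b|

/-- The Bernstein-style penalty `β(s,a,b;V)`; `n` is the count `N(s,a,b)` and
`p` is the row `P̂(·|s,a,b)` of the empirical kernel. -/
def penalty (γ δ Cb : ℝ) (N n : ℕ) (p V : 𝒮 → ℝ) : ℝ :=
  (if n = 0 then 1 / (1 - γ)
   else
     min
       (max (Real.sqrt (Cb * Real.log ((N : ℝ) / ((1 - γ) * δ)) * varP p V / (n : ℝ)))
         (2 * Cb * Real.log ((N : ℝ) / ((1 - γ) * δ)) / ((1 - γ) * (n : ℝ))))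
       (1 / (1 - γ))) + 4 / (N : ℝ)

/-- The pessimistic Bellman operator for the max-player. -/
def TpeMinus (γ δ Cb : ℝ) (N : ℕ) (n : 𝒮 → 𝒜 → ℬ → ℕ)
    (Ph : 𝒮 → 𝒜 → ℬ → 𝒮 → ℝ) (rh : 𝒮 → 𝒜 → ℬ → ℝ)
    (Q : 𝒮 → 𝒜 → ℬ → ℝ) : 𝒮 → 𝒜 → ℬ → ℝ := fun s a b =>
  max (rh s a b + γ * Pexp (Ph s a b) (valQ Q)
        - penalty γ δ Cb N (n s a b) (Ph s a b) (valQ Q)) 0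

/-- The pessimistic Bellman operator for the min-player. -/
def TpePlus (γ δ Cb : ℝ) (N : ℕ) (n : 𝒮 → 𝒜 → ℬ → ℕ)
    (Ph : 𝒮 → 𝒜 → ℬ → 𝒮 → ℝ) (rh : 𝒮 → 𝒜 → ℬ → ℝ)
    (Q : 𝒮 → 𝒜 → ℬ → ℝ) : 𝒮 → 𝒜 → ℬ → ℝ := fun s a b =>
  min (rh s a b + γ * Pexp (Ph s a b) (valQ Q)
        + penalty γ δ Cb N (n s a b) (Ph s a b) (valQ Q)) (1 / (1 - γ))

/-- Count `N(s,a,b)` of occurrences of `(s,a,b)` in the dataset `D`. -/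
def cnt {N : ℕ} (D : Fin N → 𝒮 × 𝒜 × ℬ × 𝒮) (s : 𝒮) (a : 𝒜) (b : ℬ) : ℕ :=
  (Finset.univ.filter fun i => (D i).1 = s ∧ (D i).2.1 = a ∧ (D i).2.2.1 = b).card

/-- Count of full transitions `(s,a,b,s')` in the dataset `D`. -/
def cntT {N : ℕ} (D : Fin N → 𝒮 × 𝒜 × ℬ × 𝒮) (s : 𝒮) (a : 𝒜) (b : ℬ) (s' : 𝒮) : ℕ :=
  (Finset.univ.filter fun i => D i = (s, a, b, s')).card

/-- Empirical transition kernel `P̂(·|s,a,b)` built from the dataset. -/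
def Phat {N : ℕ} (D : Fin N → 𝒮 × 𝒜 × ℬ × 𝒮) (s : 𝒮) (a : 𝒜) (b : ℬ) : 𝒮 → ℝ := fun s' =>
  if cnt D s a b = 0 then ((Fintype.card 𝒮 : ℝ))⁻¹
  else (cntT D s a b s' : ℝ) / (cnt D s a b : ℝ)

/-- Empirical reward `r̂` built from the dataset. -/
def rhat {N : ℕ} (r : 𝒮 → 𝒜 → ℬ → ℝ) (D : Fin N → 𝒮 × 𝒜 × ℬ × 𝒮)
    (s : 𝒮) (a : 𝒜) (b : ℬ) : ℝ :=
  if cnt D s a b = 0 then 0 else r s a b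

/-- Number of iterations `T = ⌈log(N/(1−γ))/log(1/γ)⌉` of VI-LCB-Game. -/
def Titer (γ : ℝ) (N : ℕ) : ℕ := ⌈Real.log ((N : ℝ) / (1 - γ)) / Real.log (1 / γ)⌉₊

/-- `Q_pe^− = Q⁻_T` produced by VI-LCB-Game on the dataset `D`. -/
def QpeMinus (γ δ Cb : ℝ) (r : 𝒮 → 𝒜 → ℬ → ℝ) {N : ℕ}
    (D : Fin N → 𝒮 × 𝒜 × ℬ × 𝒮) : 𝒮 → 𝒜 → ℬ → ℝ :=
  (TpeMinus γ δ Cb N (cnt D) (Phat D) (rhat r D))^[Titer γ N] (fun _ _ _ => 0)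

/-- `Q_pe^+ = Q⁺_T` produced by VI-LCB-Game on the dataset `D`. -/
def QpePlus (γ δ Cb : ℝ) (r : 𝒮 → 𝒜 → ℬ → ℝ) {N : ℕ}
    (D : Fin N → 𝒮 × 𝒜 × ℬ × 𝒮) : 𝒮 → 𝒜 → ℬ → ℝ :=
  (TpePlus γ δ Cb N (cnt D) (Phat D) (rhat r D))^[Titer γ N] (fun _ _ _ => 1 / (1 - γ))

/-- `(w,z)` is a (mixed) Nash equilibrium / saddle point of the matrix game `M`. -/
def IsMatrixNash (M : 𝒜 → ℬ → ℝ) (w : 𝒜 → ℝ) (z : ℬ → ℝ) : Prop :=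
  w ∈ stdSimplex ℝ 𝒜 ∧ z ∈ stdSimplex ℝ ℬ ∧
    (∀ w' ∈ stdSimplex ℝ 𝒜, pay M w' z ≤ pay M w z) ∧
    (∀ z' ∈ stdSimplex ℝ ℬ, pay M w z ≤ pay M w z')

/-- `μ` is a possible max-player output of the algorithm, given the final Q-estimate `Q`. -/
def IsOutputMax (Q : 𝒮 → 𝒜 → ℬ → ℝ) (μ : 𝒮 → 𝒜 → ℝ) : Prop :=
  ∀ s, ∃ z, IsMatrixNash (Q s) (μ s) z

/-- `ν` is a possible min-player output of the algorithm, given the final Q-estimate `Q`. -/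
def IsOutputMin (Q : 𝒮 → 𝒜 → ℬ → ℝ) (ν : 𝒮 → ℬ → ℝ) : Prop :=
  ∀ s, ∃ w, IsMatrixNash (Q s) w (ν s)

/-- `μ` is a stationary (Markov) policy. -/
def IsPolicy (μ : 𝒮 → 𝒜 → ℝ) : Prop := ∀ s, μ s ∈ stdSimplex ℝ 𝒜

/-- `P` is a probability transition kernel. -/
def IsKernel (P : 𝒮 → 𝒜 → ℬ → 𝒮 → ℝ) : Prop := ∀ s a b, P s a b ∈ stdSimplex ℝ 𝒮

/-- `r` is a reward function with values in `[0,1]`. -/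
def IsReward (r : 𝒮 → 𝒜 → ℬ → ℝ) : Prop := ∀ s a b, r s a b ∈ Set.Icc (0 : ℝ) 1

/-- `d` is a probability distribution over `𝒮 × 𝒜 × ℬ`. -/
def IsDist3 (d : 𝒮 → 𝒜 → ℬ → ℝ) : Prop :=
  (∀ s a b, 0 ≤ d s a b) ∧ (∑ s, ∑ a, ∑ b, d s a b) = 1

/-- Transition matrix `P^{μ,ν}` of the product policy `μ × ν`. -/
def Pmat (P : 𝒮 → 𝒜 → ℬ → 𝒮 → ℝ) (μ : 𝒮 → 𝒜 → ℝ) (ν : 𝒮 → ℬ → ℝ) :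
    Matrix 𝒮 𝒮 ℝ :=
  Matrix.of fun s s' => ∑ a, ∑ b, μ s a * ν s b * P s a b s'

/-- Reward vector `r^{μ,ν}` of the product policy `μ × ν`. -/
def rPol (r : 𝒮 → 𝒜 → ℬ → ℝ) (μ : 𝒮 → 𝒜 → ℝ) (ν : 𝒮 → ℬ → ℝ) : 𝒮 → ℝ :=
  fun s => ∑ a, ∑ b, μ s a * ν s b * r s a b

/-- Value function `V^{μ,ν} = (I − γP^{μ,ν})⁻¹ r^{μ,ν}`. -/
def Vpol (γ : ℝ) (P : 𝒮 → 𝒜 → ℬ → 𝒮 → ℝ) (r : 𝒮 → 𝒜 → ℬ → ℝ)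
    (μ : 𝒮 → 𝒜 → ℝ) (ν : 𝒮 → ℬ → ℝ) : 𝒮 → ℝ :=
  Matrix.mulVec ((1 : Matrix 𝒮 𝒮 ℝ) - γ • Pmat P μ ν)⁻¹ (rPol r μ ν)

/-- `V^{μ,⋆}(s) = min_ν V^{μ,ν}(s)`. -/
def VmuStar (γ : ℝ) (P : 𝒮 → 𝒜 → ℬ → 𝒮 → ℝ) (r : 𝒮 → 𝒜 → ℬ → ℝ)
    (μ : 𝒮 → 𝒜 → ℝ) : 𝒮 → ℝ := fun s =>
  ⨅ ν : {ν : 𝒮 → ℬ → ℝ // IsPolicy ν}, Vpol γ P r μ ν.1 s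

/-- `V^{⋆,ν}(s) = max_μ V^{μ,ν}(s)`. -/
def VstarNu (γ : ℝ) (P : 𝒮 → 𝒜 → ℬ → 𝒮 → ℝ) (r : 𝒮 → 𝒜 → ℬ → ℝ)
    (ν : 𝒮 → ℬ → ℝ) : 𝒮 → ℝ := fun s =>
  ⨆ μ : {μ : 𝒮 → 𝒜 → ℝ // IsPolicy μ}, Vpol γ P r μ.1 ν s

/-- `Q^{μ,ν}(s,a,b) = r(s,a,b) + γ P(·|s,a,b) V^{μ,ν}`. -/
def Qpol (γ : ℝ) (P : 𝒮 → 𝒜 → ℬ → 𝒮 → ℝ) (r : 𝒮 → 𝒜 → ℬ → ℝ)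
    (μ : 𝒮 → 𝒜 → ℝ) (ν : 𝒮 → ℬ → ℝ) : 𝒮 → 𝒜 → ℬ → ℝ := fun s a b =>
  r s a b + γ * Pexp (P s a b) (Vpol γ P r μ ν)

/-- `Q^{μ,⋆}(s,a,b) = min_ν Q^{μ,ν}(s,a,b)`. -/
def QmuStar (γ : ℝ) (P : 𝒮 → 𝒜 → ℬ → 𝒮 → ℝ) (r : 𝒮 → 𝒜 → ℬ → ℝ)
    (μ : 𝒮 → 𝒜 → ℝ) : 𝒮 → 𝒜 → ℬ → ℝ := fun s a b =>
  ⨅ ν : {ν : 𝒮 → ℬ → ℝ // IsPolicy ν}, Qpol γ P r μ ν.1 s a b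

/-- `Q^{⋆,ν}(s,a,b) = max_μ Q^{μ,ν}(s,a,b)`. -/
def QstarNu (γ : ℝ) (P : 𝒮 → 𝒜 → ℬ → 𝒮 → ℝ) (r : 𝒮 → 𝒜 → ℬ → ℝ)
    (ν : 𝒮 → ℬ → ℝ) : 𝒮 → 𝒜 → ℬ → ℝ := fun s a b =>
  ⨆ μ : {μ : 𝒮 → 𝒜 → ℝ // IsPolicy μ}, Qpol γ P r μ.1 ν s a b

/-- `(μs, νs)` is a Nash equilibrium of the Markov game. -/
def IsNashPair (γ : ℝ) (P : 𝒮 → 𝒜 → ℬ → 𝒮 → ℝ) (r : 𝒮 → 𝒜 → ℬ → ℝ)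
    (μs : 𝒮 → 𝒜 → ℝ) (νs : 𝒮 → ℬ → ℝ) : Prop :=
  IsPolicy μs ∧ IsPolicy νs ∧
    (∀ μ, IsPolicy μ → ∀ s, Vpol γ P r μ νs s ≤ Vpol γ P r μs νs s) ∧
    (∀ ν, IsPolicy ν → ∀ s, Vpol γ P r μs νs s ≤ Vpol γ P r μs ν s)

/-- `V(ρ) = Σ_s ρ(s) V(s)`. -/
def wAvg (ρ V : 𝒮 → ℝ) : ℝ := ∑ s, ρ s * V s

/-- Discounted occupancy measure `d^{μ,ν}(s;ρ) = (1−γ) ρᵀ(I−γP^{μ,ν})⁻¹`. -/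
def dOcc (γ : ℝ) (P : 𝒮 → 𝒜 → ℬ → 𝒮 → ℝ) (μ : 𝒮 → 𝒜 → ℝ) (ν : 𝒮 → ℬ → ℝ)
    (ρ : 𝒮 → ℝ) : 𝒮 → ℝ := fun s =>
  (1 - γ) * Matrix.vecMul ρ ((1 : Matrix 𝒮 𝒮 ℝ) - γ • Pmat P μ ν)⁻¹ s

/-- `d^{μ,ν}(s,a,b;ρ) = d^{μ,ν}(s;ρ) μ(a|s) ν(b|s)`. -/
def dOcc3 (γ : ℝ) (P : 𝒮 → 𝒜 → ℬ → 𝒮 → ℝ) (μ : 𝒮 → 𝒜 → ℝ) (ν : 𝒮 → ℬ → ℝ)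
    (ρ : 𝒮 → ℝ) : 𝒮 → 𝒜 → ℬ → ℝ := fun s a b =>
  dOcc γ P μ ν ρ s * μ s a * ν s b

/-- Clipped unilateral concentrability coefficient `C⋆_clipped` (in `ℝ≥0∞`;
note that in `ℝ≥0∞` one has `x/0 = ∞` for `x ≠ 0` and `0/0 = 0`, matching the
convention of the paper). -/
def clipCoeff (γ : ℝ) (P : 𝒮 → 𝒜 → ℬ → 𝒮 → ℝ) (ρ : 𝒮 → ℝ) (d : 𝒮 → 𝒜 → ℬ → ℝ)
    (μs : 𝒮 → 𝒜 → ℝ) (νs : 𝒮 → ℬ → ℝ) : ℝ≥0∞ :=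
  max
    (⨆ (μ : {μ : 𝒮 → 𝒜 → ℝ // IsPolicy μ}) (s : 𝒮) (a : 𝒜) (b : ℬ),
      ENNReal.ofReal
          (min (dOcc3 γ P μ.1 νs ρ s a b)
            ((Fintype.card 𝒮 * (Fintype.card 𝒜 + Fintype.card ℬ) : ℝ))⁻¹) /
        ENNReal.ofReal (d s a b))
    (⨆ (ν : {ν : 𝒮 → ℬ → ℝ // IsPolicy ν}) (s : 𝒮) (a : 𝒜) (b : ℬ),
      ENNReal.ofReal
          (min (dOcc3 γ P μs ν.1 ρ s a b)
            ((Fintype.card 𝒮 * (Fintype.card 𝒜 + Fintype.card ℬ) : ℝ))⁻¹) /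
        ENNReal.ofReal (d s a b))

/-- Probability weight of an individual dataset under `(d_b, P)`. -/
def dsWeight {N : ℕ} (d : 𝒮 → 𝒜 → ℬ → ℝ) (P : 𝒮 → 𝒜 → ℬ → 𝒮 → ℝ)
    (D : Fin N → 𝒮 × 𝒜 × ℬ × 𝒮) : ℝ :=
  ∏ i, d (D i).1 (D i).2.1 (D i).2.2.1 * P (D i).1 (D i).2.1 (D i).2.2.1 (D i).2.2.2

/-- Probability of an event over the offline dataset. -/
def dsProb {N : ℕ} (d : 𝒮 → 𝒜 → ℬ → ℝ) (P : 𝒮 → 𝒜 → ℬ → 𝒮 → ℝ)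
    (E : Set (Fin N → 𝒮 × 𝒜 × ℬ × 𝒮)) : ℝ :=
  ∑ D : Fin N → 𝒮 × 𝒜 × ℬ × 𝒮, E.indicator (dsWeight d P) D

/-- Expectation of a function of the offline dataset. -/
def dsExp {N : ℕ} (d : 𝒮 → 𝒜 → ℬ → ℝ) (P : 𝒮 → 𝒜 → ℬ → 𝒮 → ℝ)
    (g : (Fin N → 𝒮 × 𝒜 × ℬ × 𝒮) → ℝ) : ℝ :=
  ∑ D : Fin N → 𝒮 × 𝒜 × ℬ × 𝒮, dsWeight d P D * g D

/-- Dirac (deterministic) policy for the min-player. -/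
def diracB (f : 𝒮 → ℬ) : 𝒮 → ℬ → ℝ := fun s b => if b = f s then 1 else 0

/-- Binomial pmf. -/
def binomPMF (n : ℕ) (p : ℝ) (k : ℕ) : ℝ :=
  (n.choose k : ℝ) * p ^ k * (1 - p) ^ (n - k)

/-- Probability of a set of outcomes under a `Binomial(n,p)` distribution. -/
def binomProb (n : ℕ) (p : ℝ) (E : Set ℕ) : ℝ :=
  ∑ k ∈ Finset.range (n + 1), E.indicator (binomPMF n p) k

/-- Weight of an i.i.d. sample from a distribution on a finite set. -/
def iidWeight {𝒳 : Type} {N : ℕ} (d : 𝒳 → ℝ) (ω : Fin N → 𝒳) : ℝ := ∏ i, d (ω i)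

/-- Probability of an event for `N` i.i.d. draws from `d`. -/
def iidProb {𝒳 : Type} [Fintype 𝒳] {N : ℕ} (d : 𝒳 → ℝ) (E : Set (Fin N → 𝒳)) : ℝ :=
  ∑ ω : Fin N → 𝒳, E.indicator (iidWeight d) ω

/-- Number of occurrences of `x` in the sample `ω`. -/
def iidCount {𝒳 : Type} [DecidableEq 𝒳] {N : ℕ} (ω : Fin N → 𝒳) (x : 𝒳) : ℕ :=
  (Finset.univ.filter fun i => ω i = x).card

/-- Transition kernel of the hard instance `ℳ𝒢_θ`. -/
def hardP {S A B : ℕ} (θ : Fin A → ℝ) : Fin S → Fin A → Fin B → Fin S → ℝ :=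
  fun s a b s' =>
    if s.val = 0 ∧ b.val = 0 then
      θ a * (if s'.val = 0 then 1 else 0) + (1 - θ a) * (if s'.val = 1 then 1 else 0)
    else if s' = s then 1 else 0

/-- Reward of the hard instance: `r(s,a,b) = 1{s = 0}`. -/
def hardR {S A B : ℕ} : Fin S → Fin A → Fin B → ℝ := fun s _ _ => if s.val = 0 then 1 else 0

end ZSMG

/-!
The pessimistic Bellman operator sees a Q-function only through its value function and is a
`γ`-contraction, so `QpeMinus` is within `1 / N` of its fixed point. The obstacle to concentration
is that this fixed point depends on the very transitions whose empirical mean is to be controlled.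
Freezing the value of one state `s` makes the fixed point independent of the next states sampled
out of `s`, and moving the frozen value to a grid of mesh `1 / (2 * N)` changes the value function
by `O(1 / N)` only.

For such a leave-one-out value function the self-normalised weights `exp (t * ξ - (t * ξ) ^ 2)`,
averaged over resampled next states, give an empirical Bernstein inequality, uniformly over the
grid. The penalty dominates the resulting transition error, so one Bellman step with the true model
minus twice the penalty lies below `QpeMinus`; averaging over the two policies gives the claim.
-/

namespace ZSMG

section expectation

variable {𝒮 : Type} [Fintype 𝒮] {p V W : 𝒮 → ℝ} {c H : ℝ}

lemma Pexp_mono (hp : p ∈ stdSimplex ℝ 𝒮) (h : ∀ s, V s ≤ W s) : Pexp p V ≤ Pexp p W :=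
  Finset.sum_le_sum fun s _ => mul_le_mul_of_nonneg_left (h s) (hp.1 s)

lemma Pexp_add_const (hp : p ∈ stdSimplex ℝ 𝒮) (V : 𝒮 → ℝ) (c : ℝ) :
    Pexp p (fun s => V s + c) = Pexp p V + c := by
  simp only [Pexp, mul_add, Finset.sum_add_distrib, ← Finset.sum_mul, hp.2, one_mul]

lemma Pexp_const (hp : p ∈ stdSimplex ℝ 𝒮) (c : ℝ) : Pexp p (fun _ => c) = c := by
  simp only [Pexp, ← Finset.sum_mul, hp.2, one_mul]

lemma Pexp_le (hp : p ∈ stdSimplex ℝ 𝒮) (h : ∀ s, V s ≤ c) : Pexp p V ≤ c :=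
  (Pexp_mono hp h).trans_eq (Pexp_const hp c)

lemma le_Pexp (hp : p ∈ stdSimplex ℝ 𝒮) (h : ∀ s, c ≤ V s) : c ≤ Pexp p V :=
  (Pexp_const hp c).symm.trans_le (Pexp_mono hp h)

lemma Pexp_sub (p V W : 𝒮 → ℝ) : Pexp p (fun s => V s - W s) = Pexp p V - Pexp p W := by
  simp only [Pexp, mul_sub, Finset.sum_sub_distrib]

lemma Pexp_sum_mul {ι : Type*} [Fintype ι] (w : ι → ℝ) (p : ι → 𝒮 → ℝ) (V : 𝒮 → ℝ) :
    Pexp (fun s => ∑ i, w i * p i s) V = ∑ i, w i * Pexp (p i) V := by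
  simp only [Pexp, Finset.sum_mul, Finset.mul_sum, mul_assoc]
  exact Finset.sum_comm

lemma Pexp_const_mul (p V : 𝒮 → ℝ) (c : ℝ) : Pexp p (fun s => c * V s) = c * Pexp p V := by
  simp only [Pexp, Finset.mul_sum, mul_left_comm]

lemma abs_Pexp_sub_Pexp_le (hp : p ∈ stdSimplex ℝ 𝒮) (h : ∀ s, |V s - W s| ≤ c) :
    |Pexp p V - Pexp p W| ≤ c := by
  rw [← Pexp_sub]
  exact abs_le.2 ⟨le_Pexp hp fun s => (abs_le.1 (h s)).1, Pexp_le hp fun s => (abs_le.1 (h s)).2⟩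

lemma Pexp_sub_sq (hp : p ∈ stdSimplex ℝ 𝒮) (V : 𝒮 → ℝ) (m : ℝ) :
    Pexp p (fun s => (V s - m) ^ 2) = varP p V + (Pexp p V - m) ^ 2 := by
  have expand : Pexp p (fun s => (V s - m) ^ 2)
      = Pexp p (fun s => V s * V s) - 2 * m * Pexp p V + m ^ 2 * ∑ s, p s := by
    simp only [Pexp, Finset.mul_sum, ← Finset.sum_sub_distrib, ← Finset.sum_add_distrib]
    exact Finset.sum_congr rfl fun s _ => by ring
  rw [expand, hp.2, varP]
  ring

lemma varP_eq_Pexp_sub_sq (hp : p ∈ stdSimplex ℝ 𝒮) (V : 𝒮 → ℝ) :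
    varP p V = Pexp p (fun s => (V s - Pexp p V) ^ 2) := by
  rw [Pexp_sub_sq hp, sub_self, zero_pow two_ne_zero, add_zero]

lemma varP_le_Pexp_sub_sq (hp : p ∈ stdSimplex ℝ 𝒮) (V : 𝒮 → ℝ) (m : ℝ) :
    varP p V ≤ Pexp p (fun s => (V s - m) ^ 2) := by
  rw [Pexp_sub_sq hp]
  exact le_add_of_nonneg_right (sq_nonneg _)

lemma varP_nonneg (hp : p ∈ stdSimplex ℝ 𝒮) (V : 𝒮 → ℝ) : 0 ≤ varP p V := by
  rw [varP_eq_Pexp_sub_sq hp]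
  exact le_Pexp hp fun s => sq_nonneg _

lemma varP_le_sq (hp : p ∈ stdSimplex ℝ 𝒮) (hV : ∀ s, V s ∈ Set.Icc 0 H) : varP p V ≤ H ^ 2 :=
  (varP_le_Pexp_sub_sq hp V 0).trans <| Pexp_le hp fun s => by
    simpa only [sub_zero] using pow_le_pow_left₀ (hV s).1 (hV s).2 2

lemma varP_add_const (hp : p ∈ stdSimplex ℝ 𝒮) (V : 𝒮 → ℝ) (c : ℝ) :
    varP p (fun s => V s + c) = varP p V := by
  simp only [varP_eq_Pexp_sub_sq hp, Pexp_add_const hp, add_sub_add_right_eq_sub]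

lemma varP_le_two_mul_add (hp : p ∈ stdSimplex ℝ 𝒮) (h : ∀ s, |V s - W s| ≤ c) :
    varP p V ≤ 2 * varP p W + 2 * c ^ 2 := by
  have pointwise : ∀ s, (V s - Pexp p W) ^ 2 ≤ 2 * (W s - Pexp p W) ^ 2 + 2 * c ^ 2 := fun s => by
    have : (V s - W s) ^ 2 ≤ c ^ 2 := sq_le_sq' (abs_le.1 (h s)).1 (abs_le.1 (h s)).2
    nlinarith [sq_nonneg ((V s - W s) - (W s - Pexp p W))]
  calc varP p V ≤ Pexp p (fun s => (V s - Pexp p W) ^ 2) := varP_le_Pexp_sub_sq hp V _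
    _ ≤ Pexp p (fun s => 2 * (W s - Pexp p W) ^ 2 + 2 * c ^ 2) := Pexp_mono hp pointwise
    _ = 2 * varP p W + 2 * c ^ 2 := by
      rw [Pexp_add_const hp, Pexp_const_mul, ← varP_eq_Pexp_sub_sq hp]

lemma sub_Pexp_le (hp : p ∈ stdSimplex ℝ 𝒮) (hV : ∀ s s', V s - V s' ≤ H) (s : 𝒮) :
    V s - Pexp p V ≤ H := by
  have : V s - H ≤ Pexp p V := le_Pexp hp fun s' => by linarith [hV s s']
  linarith

lemma varP_sub_varP_le (hp : p ∈ stdSimplex ℝ 𝒮) (hV : ∀ s s', V s - V s' ≤ H)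
    (hW : ∀ s s', W s - W s' ≤ H) (h : ∀ s, V s ≤ W s) :
    varP p W - varP p V ≤ 2 * H * (Pexp p W - Pexp p V) := by
  have factor : varP p W - varP p V
      = Pexp p (fun s => (W s - V s) * ((W s - Pexp p W) + (V s - Pexp p V))) := by
    have : Pexp p (fun s => (W s - V s) * ((W s - Pexp p W) + (V s - Pexp p V)))
        = Pexp p (fun s => W s * W s) - Pexp p (fun s => V s * V s)
          - (Pexp p W + Pexp p V) * (Pexp p W - Pexp p V) := by
      conv_rhs => rw [← Pexp_sub, ← Pexp_sub, ← Pexp_const_mul, ← Pexp_sub]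
      exact congrArg (Pexp p) (funext fun s => by ring)
    rw [this, varP, varP]
    ring
  rw [factor, ← Pexp_sub, ← Pexp_const_mul]
  refine Pexp_mono hp fun s => ?_
  rw [mul_comm (2 * H)]
  refine mul_le_mul_of_nonneg_left ?_ (sub_nonneg.2 (h s))
  linarith [sub_Pexp_le hp hV s, sub_Pexp_le hp hW s]

/-- The floor `2 κ H` absorbs the derivative of the square root: above it, raising the mean by `m`
raises the scaled variance by at most `2 κ H m`, hence its root by at most `m / 2`. -/
lemma max_sqrt_varP_le_add_half {κ : ℝ} (hp : p ∈ stdSimplex ℝ 𝒮)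
    (hV : ∀ s s', V s - V s' ≤ H) (hW : ∀ s s', W s - W s' ≤ H) (h : ∀ s, V s ≤ W s) :
    max (√(κ * varP p W)) (2 * κ * H)
      ≤ max (√(κ * varP p V)) (2 * κ * H) + (Pexp p W - Pexp p V) / 2 := by
  have hmean : 0 ≤ Pexp p W - Pexp p V := sub_nonneg.2 (Pexp_mono hp h)
  set m := max (√(κ * varP p V)) (2 * κ * H)
  have hm : 2 * κ * H ≤ m := le_max_right _ _
  have hm₀ : 0 ≤ m := le_max_of_le_left (Real.sqrt_nonneg _)
  refine max_le (Real.sqrt_le_iff.2 ⟨by linarith, ?_⟩) (by linarith)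
  rcases le_total κ 0 with hκ | hκ
  · exact (mul_nonpos_of_nonpos_of_nonneg hκ (varP_nonneg hp W)).trans (sq_nonneg _)
  have hsq : κ * varP p V ≤ m ^ 2 := (Real.sqrt_le_left hm₀).1 (le_max_left _ _)
  have hvar := mul_le_mul_of_nonneg_left (varP_sub_varP_le hp hV hW h) hκ
  nlinarith [mul_le_mul_of_nonneg_right hm hmean]

end expectation

section penalty

variable {𝒮 : Type} [Fintype 𝒮] {γ δ Cb : ℝ} {N n : ℕ} {p V W : 𝒮 → ℝ}

lemma penalty_zero_count (γ δ Cb : ℝ) (N : ℕ) (p V : 𝒮 → ℝ) :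
    penalty γ δ Cb N 0 p V = 1 / (1 - γ) + 4 / (N : ℝ) := by
  rw [penalty, if_pos rfl]

lemma penalty_of_ne_zero (hγ : γ < 1) (hn : n ≠ 0) (δ Cb : ℝ) (N : ℕ) (p V : 𝒮 → ℝ) :
    penalty γ δ Cb N n p V
      = min (max (√(Cb * Real.log (N / ((1 - γ) * δ)) / n * varP p V))
          (2 * (Cb * Real.log (N / ((1 - γ) * δ)) / n) * (1 / (1 - γ)))) (1 / (1 - γ))
        + 4 / (N : ℝ) := by
  have hn' : (n : ℝ) ≠ 0 := Nat.cast_ne_zero.2 hn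
  have hγ' : 1 - γ ≠ 0 := (sub_pos.2 hγ).ne'
  rw [penalty, if_neg hn]
  congr 4 <;> field_simp

lemma four_div_le_penalty (hγ : γ < 1) : 4 / (N : ℝ) ≤ penalty γ δ Cb N n p V := by
  have : 0 ≤ 1 / (1 - γ) := one_div_nonneg.2 (sub_nonneg.2 hγ.le)
  refine le_add_of_nonneg_left ?_
  split_ifs
  · exact this
  · exact le_min (le_max_of_le_left (Real.sqrt_nonneg _)) this

lemma discounted_sub_penalty_le {c : ℝ} (hγ₂ : 1 / 2 ≤ γ) (hγ : γ < 1)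
    (hp : p ∈ stdSimplex ℝ 𝒮) (hV : ∀ s, V s ∈ Set.Icc 0 (1 / (1 - γ)))
    (hW : ∀ s, W s ∈ Set.Icc 0 (1 / (1 - γ))) (h : ∀ s, V s ≤ W s + c) :
    γ * Pexp p V - penalty γ δ Cb N n p V
      ≤ γ * Pexp p W - penalty γ δ Cb N n p W + γ * c := by
  have hmean : Pexp p V ≤ Pexp p W + c := (Pexp_mono hp h).trans_eq (Pexp_add_const hp W c)
  suffices penalty γ δ Cb N n p W ≤ penalty γ δ Cb N n p V + (Pexp p W + c - Pexp p V) / 2 by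
    nlinarith
  rcases eq_or_ne n 0 with rfl | hn
  · simp only [penalty_zero_count]
    linarith
  have hroot := max_sqrt_varP_le_add_half (H := 1 / (1 - γ))
    (κ := Cb * Real.log (N / ((1 - γ) * δ)) / n) hp
    (fun s s' => by linarith [(hV s).2, (hV s').1])
    (fun s s' => by linarith [(hW s).2, (hW s').1]) h
  rw [varP_add_const hp, Pexp_add_const hp] at hroot
  rw [penalty_of_ne_zero hγ hn, penalty_of_ne_zero hγ hn, add_right_comm]
  refine add_le_add_left ((min_le_min hroot ?_).trans_eq (min_add _ _ _).symm) _
  linarith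

end penalty

section matrixGame

variable {𝒮 𝒜 ℬ : Type} [Fintype 𝒜] [Fintype ℬ]

lemma pay_const {w : 𝒜 → ℝ} {z : ℬ → ℝ} (hw : w ∈ stdSimplex ℝ 𝒜) (hz : z ∈ stdSimplex ℝ ℬ)
    (c : ℝ) : pay (fun _ _ => c) w z = c := by
  simp only [pay, ← Finset.sum_mul, ← Finset.mul_sum, hz.2, hw.2, one_mul, mul_one]

lemma pay_le_pay_add {M M' : 𝒜 → ℬ → ℝ} {w : 𝒜 → ℝ} {z : ℬ → ℝ} {c : ℝ}
    (hw : w ∈ stdSimplex ℝ 𝒜) (hz : z ∈ stdSimplex ℝ ℬ) (h : ∀ a b, M a b ≤ M' a b + c) :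
    pay M w z ≤ pay M' w z + c := by
  calc pay M w z ≤ pay (fun a b => M' a b + c) w z :=
        Finset.sum_le_sum fun a _ => Finset.sum_le_sum fun b _ =>
          mul_le_mul_of_nonneg_left (h a b) (mul_nonneg (hw.1 a) (hz.1 b))
    _ = pay M' w z + pay (fun _ _ => c) w z := by
        simp only [pay, mul_add, Finset.sum_add_distrib]
    _ = pay M' w z + c := by rw [pay_const hw hz]

lemma abs_pay_le_norm (M : 𝒜 → ℬ → ℝ) {w : 𝒜 → ℝ} {z : ℬ → ℝ} (hw : w ∈ stdSimplex ℝ 𝒜)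
    (hz : z ∈ stdSimplex ℝ ℬ) : |pay M w z| ≤ ‖M‖ := by
  have hM : ∀ a b, |M a b| ≤ ‖M‖ := fun a b =>
    (norm_le_pi_norm (M a) b).trans (norm_le_pi_norm M a)
  have upper := pay_le_pay_add (M' := fun _ _ => 0) hw hz
    fun a b => (zero_add ‖M‖).symm ▸ (abs_le.1 (hM a b)).2
  have lower := pay_le_pay_add (M := fun _ _ => 0) hw hz
    fun a b => neg_le_iff_add_nonneg.1 (abs_le.1 (hM a b)).1
  rw [pay_const hw hz] at upper lower
  exact abs_le.2 ⟨by linarith, by linarith⟩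

lemma bddBelow_range_pay (M : 𝒜 → ℬ → ℝ) (w : stdSimplex ℝ 𝒜) :
    BddBelow (Set.range fun z : stdSimplex ℝ ℬ => pay M w.1 z.1) :=
  ⟨-‖M‖, Set.forall_mem_range.2 fun z => (abs_le.1 (abs_pay_le_norm M w.2 z.2)).1⟩

lemma bddAbove_range_iInf_pay [Nonempty ℬ] (M : 𝒜 → ℬ → ℝ) :
    BddAbove (Set.range fun w : stdSimplex ℝ 𝒜 => ⨅ z : stdSimplex ℝ ℬ, pay M w.1 z.1) := by
  obtain ⟨z⟩ : Nonempty (stdSimplex ℝ ℬ) := inferInstance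
  exact ⟨‖M‖, Set.forall_mem_range.2 fun w =>
    (ciInf_le (bddBelow_range_pay M w) z).trans (abs_le.1 (abs_pay_le_norm M w.2 z.2)).2⟩

lemma le_valQ [Nonempty ℬ] {Q : 𝒮 → 𝒜 → ℬ → ℝ} {s : 𝒮} {w : 𝒜 → ℝ} {t : ℝ}
    (hw : w ∈ stdSimplex ℝ 𝒜) (h : ∀ z ∈ stdSimplex ℝ ℬ, t ≤ pay (Q s) w z) : t ≤ valQ Q s :=
  (le_ciInf fun z : stdSimplex ℝ ℬ => h z.1 z.2).trans
    (le_ciSup (bddAbove_range_iInf_pay (Q s)) ⟨w, hw⟩)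

variable [Nonempty 𝒜] [Nonempty ℬ]

lemma valQ_le_valQ_add {Q Q' : 𝒮 → 𝒜 → ℬ → ℝ} {s : 𝒮} {c : ℝ}
    (h : ∀ a b, Q s a b ≤ Q' s a b + c) : valQ Q s ≤ valQ Q' s + c := by
  refine ciSup_le fun w => sub_le_iff_le_add.1 (le_valQ w.2 fun z hz => sub_le_iff_le_add.2 ?_)
  exact (ciInf_le (bddBelow_range_pay (Q s) w) ⟨z, hz⟩).trans (pay_le_pay_add w.2 hz h)

lemma abs_valQ_sub_valQ_le {Q Q' : 𝒮 → 𝒜 → ℬ → ℝ} {s : 𝒮} {c : ℝ}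
    (h : ∀ a b, |Q s a b - Q' s a b| ≤ c) : |valQ Q s - valQ Q' s| ≤ c :=
  abs_sub_le_iff.2
    ⟨sub_le_iff_le_add'.2 <| valQ_le_valQ_add fun a b =>
        sub_le_iff_le_add'.1 (abs_sub_le_iff.1 (h a b)).1,
      sub_le_iff_le_add'.2 <| valQ_le_valQ_add fun a b =>
        sub_le_iff_le_add'.1 (abs_sub_le_iff.1 (h a b)).2⟩

lemma valQ_of_const {Q : 𝒮 → 𝒜 → ℬ → ℝ} {s : 𝒮} {c : ℝ} (h : ∀ a b, Q s a b = c) :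
    valQ Q s = c := by
  have hQ : Q s = fun _ _ => c := funext₂ h
  simp only [valQ, hQ, pay_const (Subtype.prop _) (Subtype.prop _), ciInf_const, ciSup_const]

lemma valQ_mem_Icc {Q : 𝒮 → 𝒜 → ℬ → ℝ} {s : 𝒮} {l u : ℝ}
    (h : ∀ a b, Q s a b ∈ Set.Icc l u) : valQ Q s ∈ Set.Icc l u := by
  have valQ_const : ∀ c, valQ (fun (_ : 𝒮) (_ : 𝒜) (_ : ℬ) => c) s = c :=
    fun c => valQ_of_const fun _ _ => rfl
  have lower : valQ (fun (_ : 𝒮) (_ : 𝒜) (_ : ℬ) => l) s ≤ valQ Q s + 0 :=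
    valQ_le_valQ_add fun a b => (h a b).1.trans_eq (add_zero _).symm
  have upper : valQ Q s ≤ valQ (fun (_ : 𝒮) (_ : 𝒜) (_ : ℬ) => u) s + 0 :=
    valQ_le_valQ_add fun a b => (h a b).2.trans_eq (add_zero u).symm
  rw [valQ_const, add_zero] at lower upper
  exact ⟨lower, upper⟩

end matrixGame

section valueContraction

variable {𝒮 𝒜 ℬ : Type} {γ : ℝ}

/-- The Q-functions with values in `[0, 1/(1-γ)]`. -/
def qBox (γ : ℝ) : Set (𝒮 → 𝒜 → ℬ → ℝ) :=
  {Q | ∀ s a b, Q s a b ∈ Set.Icc 0 (1 / (1 - γ))}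

lemma isClosed_qBox (γ : ℝ) : IsClosed (qBox γ : Set (𝒮 → 𝒜 → ℬ → ℝ)) := by
  simp only [qBox, Set.ofPred_forall]
  exact isClosed_iInter fun s => isClosed_iInter fun a => isClosed_iInter fun b =>
    isClosed_Icc.preimage (by fun_prop)

lemma zero_mem_qBox (hγ : γ < 1) : (fun _ _ _ => 0 : 𝒮 → 𝒜 → ℬ → ℝ) ∈ qBox γ :=
  fun _ _ _ => ⟨le_rfl, one_div_nonneg.2 (sub_nonneg.2 hγ.le)⟩

lemma valQ_mem_Icc_of_mem_qBox [Fintype 𝒜] [Fintype ℬ] [Nonempty 𝒜] [Nonempty ℬ]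
    {Q : 𝒮 → 𝒜 → ℬ → ℝ} (hQ : Q ∈ qBox γ) (s : 𝒮) : valQ Q s ∈ Set.Icc 0 (1 / (1 - γ)) :=
  valQ_mem_Icc (hQ s)

/-- `T` preserves `qBox γ` and contracts the distance between value functions by the factor `γ`.
Bellman operators see a Q-function only through its value function, hence the premise on `valQ`. -/
structure IsValueContraction [Fintype 𝒜] [Fintype ℬ] (γ : ℝ)
    (T : (𝒮 → 𝒜 → ℬ → ℝ) → 𝒮 → 𝒜 → ℬ → ℝ) : Prop where
  mapsTo : Set.MapsTo T (qBox γ) (qBox γ)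
  abs_sub_le : ∀ Q ∈ qBox γ, ∀ Q' ∈ qBox γ, ∀ c, (∀ s, |valQ Q s - valQ Q' s| ≤ c) →
    ∀ s a b, |T Q s a b - T Q' s a b| ≤ γ * c

/-- A fixed point of `T` in `qBox γ`, if there is one. It depends on nothing but `γ` and `T`. -/
def fixedQ (γ : ℝ) (T : (𝒮 → 𝒜 → ℬ → ℝ) → 𝒮 → 𝒜 → ℬ → ℝ) : 𝒮 → 𝒜 → ℬ → ℝ :=
  Classical.epsilon fun Q => Q ∈ qBox γ ∧ Function.IsFixedPt T Q

/-- The operator `T` with the state `s` made absorbing, of value `u`. -/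
def freezeAt [DecidableEq 𝒮] (s : 𝒮) (u : ℝ) (T : (𝒮 → 𝒜 → ℬ → ℝ) → 𝒮 → 𝒜 → ℬ → ℝ) :
    (𝒮 → 𝒜 → ℬ → ℝ) → 𝒮 → 𝒜 → ℬ → ℝ :=
  fun Q => Function.update (T Q) s fun _ _ => u

lemma exists_isFixedPt_of_lipschitzOnWith {X : Type*} [MetricSpace X] [CompleteSpace X]
    {K : NNReal} {s : Set X} {f : X → X} (hs : IsClosed s) (hne : s.Nonempty) (hK : K < 1)
    (hf : Set.MapsTo f s s) (hLip : LipschitzOnWith K f s) : ∃ x ∈ s, Function.IsFixedPt f x := by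
  obtain ⟨x, hx⟩ := hne
  obtain ⟨y, hy, hfix, -⟩ := ContractingWith.exists_fixedPoint' hs.isComplete hf
    ⟨hK, hLip.mapsToRestrict hf⟩ hx (edist_ne_top _ _)
  exact ⟨y, hy, hfix⟩

variable [Fintype 𝒜] [Fintype ℬ] {T : (𝒮 → 𝒜 → ℬ → ℝ) → 𝒮 → 𝒜 → ℬ → ℝ}

lemma isValueContraction_freezeAt [DecidableEq 𝒮] (hT : IsValueContraction γ T) (hγ₀ : 0 ≤ γ)
    {u : ℝ} (hu : u ∈ Set.Icc 0 (1 / (1 - γ))) (s : 𝒮) :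
    IsValueContraction γ (freezeAt s u T) where
  mapsTo Q hQ s' a b := by
    rcases eq_or_ne s' s with rfl | h
    · simpa only [freezeAt, Function.update_self] using hu
    · simpa only [freezeAt, Function.update_of_ne h] using hT.mapsTo hQ s' a b
  abs_sub_le Q hQ Q' hQ' c h s' a b := by
    rcases eq_or_ne s' s with rfl | hs
    · simpa only [freezeAt, Function.update_self, sub_self, abs_zero]
        using mul_nonneg hγ₀ ((abs_nonneg _).trans (h s'))
    · simpa only [freezeAt, Function.update_of_ne hs]
        using hT.abs_sub_le Q hQ Q' hQ' c h s' a b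

variable [Nonempty 𝒜] [Nonempty ℬ]

lemma IsValueContraction.abs_iterate_sub_iterate_le (hT : IsValueContraction γ T)
    {Q Q' : 𝒮 → 𝒜 → ℬ → ℝ} (hQ : Q ∈ qBox γ) (hQ' : Q' ∈ qBox γ) (t : ℕ) (s : 𝒮) (a : 𝒜)
    (b : ℬ) : |T^[t] Q s a b - T^[t] Q' s a b| ≤ γ ^ t * (1 / (1 - γ)) := by
  induction t generalizing s a b with
  | zero =>
    rw [pow_zero, one_mul]
    exact abs_sub_le_of_nonneg_of_le (hQ s a b).1 (hQ s a b).2 (hQ' s a b).1 (hQ' s a b).2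
  | succ t ih =>
    rw [Function.iterate_succ_apply', Function.iterate_succ_apply', pow_succ', mul_assoc]
    exact hT.abs_sub_le _ (hT.mapsTo.iterate t hQ) _ (hT.mapsTo.iterate t hQ') _
      (fun s => abs_valQ_sub_valQ_le (ih s)) s a b

lemma IsValueContraction.lipschitzOnWith [Fintype 𝒮] (hT : IsValueContraction γ T) (hγ₀ : 0 ≤ γ) :
    LipschitzOnWith ⟨γ, hγ₀⟩ T (qBox γ) := by
  refine LipschitzOnWith.of_dist_le_mul fun Q hQ Q' hQ' => ?_
  have value_dist : ∀ s, |valQ Q s - valQ Q' s| ≤ dist Q Q' := fun s =>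
    abs_valQ_sub_valQ_le fun a b => ((dist_le_pi_dist (Q s a) (Q' s a) b).trans
      (dist_le_pi_dist (Q s) (Q' s) a)).trans (dist_le_pi_dist Q Q' s)
  have hc : 0 ≤ γ * dist Q Q' := mul_nonneg hγ₀ dist_nonneg
  exact (dist_pi_le_iff hc).2 fun s => (dist_pi_le_iff hc).2 fun a => (dist_pi_le_iff hc).2
    fun b => hT.abs_sub_le Q hQ Q' hQ' _ value_dist s a b

variable [Finite 𝒮]

lemma IsValueContraction.fixedQ_spec (hT : IsValueContraction γ T) (hγ₀ : 0 ≤ γ) (hγ : γ < 1) :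
    fixedQ γ T ∈ qBox γ ∧ Function.IsFixedPt T (fixedQ γ T) :=
  have := Fintype.ofFinite 𝒮
  Classical.epsilon_spec <| exists_isFixedPt_of_lipschitzOnWith (isClosed_qBox γ)
    ⟨_, zero_mem_qBox hγ⟩ (by exact_mod_cast hγ) hT.mapsTo (hT.lipschitzOnWith hγ₀)

lemma IsValueContraction.abs_valQ_fixedQ_freezeAt_sub_le [DecidableEq 𝒮]
    (hT : IsValueContraction γ T) (hγ₀ : 0 ≤ γ) (hγ : γ < 1) {u : ℝ}
    (hu : u ∈ Set.Icc 0 (1 / (1 - γ))) (s s' : 𝒮) :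
    |valQ (fixedQ γ (freezeAt s u T)) s' - valQ (fixedQ γ T) s'|
      ≤ |u - valQ (fixedQ γ T) s| := by
  obtain ⟨hQ, hQfix⟩ := hT.fixedQ_spec hγ₀ hγ
  obtain ⟨hF, hFfix⟩ := (isValueContraction_freezeAt hT hγ₀ hu s).fixedQ_spec hγ₀ hγ
  set Q := fixedQ γ T
  set F := fixedQ γ (freezeAt s u T)
  have : Nonempty 𝒮 := ⟨s⟩
  obtain ⟨s₀, hs₀⟩ := Finite.exists_max fun s => |valQ F s - valQ Q s|
  refine (hs₀ s').trans ?_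
  rcases eq_or_ne s₀ s with rfl | hne
  · rw [valQ_of_const (Q := F) (c := u) fun a b => ?_]
    rw [← hFfix, freezeAt, Function.update_self]
  · have row : |valQ F s₀ - valQ Q s₀| ≤ γ * |valQ F s₀ - valQ Q s₀| :=
      abs_valQ_sub_valQ_le fun a b => by
        have := hT.abs_sub_le F hF Q hQ _ hs₀ s₀ a b
        rwa [hQfix, ← Function.update_of_ne hne (fun _ _ => u) (T F),
          show Function.update (T F) s (fun _ _ => u) = F from hFfix] at this
    nlinarith [abs_nonneg (valQ F s₀ - valQ Q s₀), abs_nonneg (u - valQ Q s)]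

end valueContraction

section pessimisticOperator

variable {𝒮 𝒜 ℬ : Type} [Fintype 𝒮] [Fintype 𝒜] [Fintype ℬ] {γ δ Cb : ℝ} {N : ℕ}
  {n : 𝒮 → 𝒜 → ℬ → ℕ} {Ph : 𝒮 → 𝒜 → ℬ → 𝒮 → ℝ} {rh : 𝒮 → 𝒜 → ℬ → ℝ}

lemma TpeMinus_mem_qBox [Nonempty 𝒜] [Nonempty ℬ] (hγ₀ : 0 ≤ γ) (hγ : γ < 1) (hPh : IsKernel Ph)
    (hrh : IsReward rh) {Q : 𝒮 → 𝒜 → ℬ → ℝ} (hQ : Q ∈ qBox γ) :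
    TpeMinus γ δ Cb N n Ph rh Q ∈ qBox γ := fun s a b => by
  have hH : 1 + γ * (1 / (1 - γ)) = 1 / (1 - γ) := by
    field_simp [(sub_pos.2 hγ).ne']
    ring
  have hmean : Pexp (Ph s a b) (valQ Q) ≤ 1 / (1 - γ) :=
    Pexp_le (hPh s a b) fun s' => (valQ_mem_Icc_of_mem_qBox hQ s').2
  have hpen : 0 ≤ penalty γ δ Cb N (n s a b) (Ph s a b) (valQ Q) :=
    le_trans (by positivity) (four_div_le_penalty hγ)
  refine ⟨le_max_right _ _, max_le ?_ (one_div_nonneg.2 (sub_nonneg.2 hγ.le))⟩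
  linarith [(hrh s a b).2, mul_le_mul_of_nonneg_left hmean hγ₀]

lemma TpeMinus_le_TpeMinus_add (hγ₂ : 1 / 2 ≤ γ) (hγ : γ < 1) (hPh : IsKernel Ph)
    {Q Q' : 𝒮 → 𝒜 → ℬ → ℝ} {c : ℝ} (hc : 0 ≤ c)
    (hQ : ∀ s, valQ Q s ∈ Set.Icc 0 (1 / (1 - γ)))
    (hQ' : ∀ s, valQ Q' s ∈ Set.Icc 0 (1 / (1 - γ)))
    (h : ∀ s, valQ Q s ≤ valQ Q' s + c) (s : 𝒮) (a : 𝒜) (b : ℬ) :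
    TpeMinus γ δ Cb N n Ph rh Q s a b ≤ TpeMinus γ δ Cb N n Ph rh Q' s a b + γ * c := by
  have := discounted_sub_penalty_le (δ := δ) (Cb := Cb) (N := N) (n := n s a b) hγ₂ hγ
    (hPh s a b) hQ hQ' h
  simp only [TpeMinus]
  rw [max_add, zero_add]
  exact max_le_max (by linarith) (by nlinarith)

lemma isValueContraction_TpeMinus [Nonempty 𝒜] [Nonempty ℬ] (hγ₂ : 1 / 2 ≤ γ) (hγ : γ < 1)
    (hPh : IsKernel Ph) (hrh : IsReward rh) :
    IsValueContraction γ (TpeMinus γ δ Cb N n Ph rh) where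
  mapsTo Q hQ := TpeMinus_mem_qBox (by linarith) hγ hPh hrh hQ
  abs_sub_le Q hQ Q' hQ' c h s a b := by
    have hc : 0 ≤ c := (abs_nonneg _).trans (h s)
    have hV := valQ_mem_Icc_of_mem_qBox hQ
    have hV' := valQ_mem_Icc_of_mem_qBox hQ'
    exact abs_sub_le_iff.2
      ⟨sub_le_iff_le_add'.2 <| TpeMinus_le_TpeMinus_add hγ₂ hγ hPh hc hV hV'
          (fun s => sub_le_iff_le_add'.1 (abs_sub_le_iff.1 (h s)).1) s a b,
        sub_le_iff_le_add'.2 <| TpeMinus_le_TpeMinus_add hγ₂ hγ hPh hc hV' hV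
          (fun s => sub_le_iff_le_add'.1 (abs_sub_le_iff.1 (h s)).2) s a b⟩

lemma pow_Titer_mul_le (hγ₀ : 0 < γ) (hγ : γ < 1) (hN : N ≠ 0) :
    γ ^ Titer γ N * (1 / (1 - γ)) ≤ 1 / N := by
  have : (0 : ℝ) < N := by exact_mod_cast Nat.pos_of_ne_zero hN
  have : 0 < 1 - γ := sub_pos.2 hγ
  have hceil : Real.log (N / (1 - γ)) / Real.log (1 / γ) ≤ Titer γ N := Nat.le_ceil _
  rw [div_le_iff₀ (Real.log_pos (one_lt_one_div hγ₀ hγ)), ← Real.log_pow,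
    Real.log_le_log_iff (by positivity) (by positivity), one_div, inv_pow,
    le_inv_comm₀ (by positivity) (by positivity), inv_div] at hceil
  calc γ ^ Titer γ N * (1 / (1 - γ)) ≤ (1 - γ) / N * (1 / (1 - γ)) := by gcongr
    _ = 1 / N := by field_simp

end pessimisticOperator

section dataset

variable {𝒮 𝒜 ℬ : Type} {N : ℕ}

/-- A dataset of `N` transitions `(s, a, b, s')`. -/
abbrev Dataset (𝒮 𝒜 ℬ : Type) (N : ℕ) : Type := Fin N → 𝒮 × 𝒜 × ℬ × 𝒮

/-- The dataset `D` with the next state of its `i`-th transition replaced by `y`. -/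
def setNext (D : Dataset 𝒮 𝒜 ℬ N) (i : Fin N) (y : 𝒮) : Dataset 𝒮 𝒜 ℬ N :=
  Function.update D i ((D i).1, (D i).2.1, (D i).2.2.1, y)

lemma setNext_apply_self (D : Dataset 𝒮 𝒜 ℬ N) (i : Fin N) (y : 𝒮) :
    setNext D i y i = ((D i).1, (D i).2.1, (D i).2.2.1, y) :=
  Function.update_self ..

lemma setNext_apply_of_ne (D : Dataset 𝒮 𝒜 ℬ N) {i j : Fin N} (h : j ≠ i) (y : 𝒮) :
    setNext D i y j = D j :=
  Function.update_of_ne h ..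

lemma setNext_setNext_next (D : Dataset 𝒮 𝒜 ℬ N) (i : Fin N) (y : 𝒮) :
    setNext (setNext D i y) i (D i).2.2.2 = D := by
  rw [setNext, setNext_apply_self, setNext, Function.update_idem, Function.update_eq_self]

variable [DecidableEq 𝒮] [DecidableEq 𝒜] [DecidableEq ℬ]

/-- The indices of the transitions of `D` out of `(s, a, b)`. -/
def visits (D : Dataset 𝒮 𝒜 ℬ N) (s : 𝒮) (a : 𝒜) (b : ℬ) : Finset (Fin N) :=
  Finset.univ.filter fun i => (D i).1 = s ∧ (D i).2.1 = a ∧ (D i).2.2.1 = b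

lemma mem_visits {D : Dataset 𝒮 𝒜 ℬ N} {s : 𝒮} {a : 𝒜} {b : ℬ} {i : Fin N} :
    i ∈ visits D s a b ↔ (D i).1 = s ∧ (D i).2.1 = a ∧ (D i).2.2.1 = b :=
  Finset.mem_filter_univ i

lemma card_visits (D : Dataset 𝒮 𝒜 ℬ N) (s : 𝒮) (a : 𝒜) (b : ℬ) :
    (visits D s a b).card = cnt D s a b :=
  rfl

lemma visits_setNext (D : Dataset 𝒮 𝒜 ℬ N) (i : Fin N) (y s : 𝒮) (a : 𝒜) (b : ℬ) :
    visits (setNext D i y) s a b = visits D s a b := by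
  ext j
  rcases eq_or_ne j i with rfl | h
  · simp only [mem_visits, setNext_apply_self]
  · simp only [mem_visits, setNext_apply_of_ne D h]

lemma cnt_setNext (D : Dataset 𝒮 𝒜 ℬ N) (i : Fin N) (y : 𝒮) : cnt (setNext D i y) = cnt D := by
  funext s a b
  simp only [← card_visits, visits_setNext]

lemma cntT_eq_card_filter_visits (D : Dataset 𝒮 𝒜 ℬ N) (s : 𝒮) (a : 𝒜) (b : ℬ) (s' : 𝒮) :
    cntT D s a b s' = ((visits D s a b).filter fun i => (D i).2.2.2 = s').card := by
  simp only [cntT, visits, Finset.filter_filter, Prod.ext_iff, and_assoc]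

lemma cnt_le (D : Dataset 𝒮 𝒜 ℬ N) (s : 𝒮) (a : 𝒜) (b : ℬ) : cnt D s a b ≤ N :=
  (Finset.card_le_univ _).trans_eq (Fintype.card_fin N)

lemma sum_cnt [Fintype 𝒮] [Fintype 𝒜] [Fintype ℬ] (D : Dataset 𝒮 𝒜 ℬ N) :
    ∑ s, ∑ a, ∑ b, cnt D s a b = N := by
  have fiber := Finset.card_eq_sum_card_fiberwise (s := (Finset.univ : Finset (Fin N)))
    (t := (Finset.univ : Finset (𝒮 × 𝒜 × ℬ)))
    (f := fun i => ((D i).1, (D i).2.1, (D i).2.2.1))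
    fun _ _ => Finset.mem_coe.2 (Finset.mem_univ _)
  rw [Finset.card_univ, Fintype.card_fin] at fiber
  simpa only [Fintype.sum_prod_type, Prod.mk.injEq, cnt] using fiber.symm

lemma prod_visits_inter_setNext {s : 𝒮} {a : 𝒜} {b : ℬ} {D : Dataset 𝒮 𝒜 ℬ N} {i : Fin N}
    {J : Finset (Fin N)} (hJ : i ∉ J) (g : 𝒮 → ℝ) (y : 𝒮) :
    ∏ j ∈ visits (setNext D i y) s a b ∩ J, g (setNext D i y j).2.2.2
      = ∏ j ∈ visits D s a b ∩ J, g (D j).2.2.2 := by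
  rw [visits_setNext]
  refine Finset.prod_congr rfl fun j hj => ?_
  rw [setNext_apply_of_ne D (ne_of_mem_of_not_mem (Finset.mem_of_mem_inter_right hj) hJ)]

lemma isReward_rhat {r : 𝒮 → 𝒜 → ℬ → ℝ} (hr : IsReward r) (D : Dataset 𝒮 𝒜 ℬ N) :
    IsReward (rhat r D) := by
  intro s a b
  rw [rhat]
  split_ifs
  · exact ⟨le_rfl, zero_le_one⟩
  · exact hr s a b

variable [Fintype 𝒮]

lemma Phat_setNext {D : Dataset 𝒮 𝒜 ℬ N} {i : Fin N} {s : 𝒮} (h : (D i).1 ≠ s) (y : 𝒮) (a : 𝒜)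
    (b : ℬ) : Phat (setNext D i y) s a b = Phat D s a b := by
  have hT : ∀ s', cntT (setNext D i y) s a b s' = cntT D s a b s' := fun s' => by
    simp only [cntT_eq_card_filter_visits, visits_setNext]
    refine congrArg Finset.card (Finset.filter_congr fun j hj => ?_)
    rw [setNext_apply_of_ne]
    rintro rfl
    exact h (mem_visits.1 hj).1
  funext s'
  simp only [Phat, cnt_setNext, hT]

lemma cnt_mul_Pexp_Phat {D : Dataset 𝒮 𝒜 ℬ N} {s : 𝒮} {a : 𝒜} {b : ℬ} (h : cnt D s a b ≠ 0)
    (f : 𝒮 → ℝ) :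
    cnt D s a b * Pexp (Phat D s a b) f = ∑ i ∈ visits D s a b, f (D i).2.2.2 := by
  rw [← Finset.sum_fiberwise', Pexp, Finset.mul_sum]
  refine Finset.sum_congr rfl fun s' _ => ?_
  rw [Finset.sum_const, ← cntT_eq_card_filter_visits, nsmul_eq_mul, Phat, if_neg h, ← mul_assoc,
    mul_div_cancel₀ _ (Nat.cast_ne_zero.2 h)]

lemma isKernel_Phat [Nonempty 𝒮] (D : Dataset 𝒮 𝒜 ℬ N) : IsKernel (Phat D) := by
  intro s a b
  refine ⟨fun s' => ?_, ?_⟩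
  · rw [Phat]
    split_ifs <;> positivity
  · by_cases h : cnt D s a b = 0
    · simp [Phat, h]
    · have total := cnt_mul_Pexp_Phat h fun _ => 1
      rw [Finset.sum_const, card_visits, nsmul_one] at total
      simpa only [Pexp, mul_one] using mul_left_cancel₀ (Nat.cast_ne_zero.2 h)
        (total.trans (mul_one _).symm)

end dataset

section probability

variable {𝒮 𝒜 ℬ : Type} {N : ℕ} {d : 𝒮 → 𝒜 → ℬ → ℝ} {P : 𝒮 → 𝒜 → ℬ → 𝒮 → ℝ}

lemma dsWeight_setNext_mul (D : Dataset 𝒮 𝒜 ℬ N) (i : Fin N) (y : 𝒮) :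
    dsWeight d P (setNext D i y) * P (D i).1 (D i).2.1 (D i).2.2.1 (D i).2.2.2
      = dsWeight d P D * P (D i).1 (D i).2.1 (D i).2.2.1 y := by
  have rest : ∀ j ∈ ({i} : Finset (Fin N))ᶜ, setNext D i y j = D j := fun j hj =>
    setNext_apply_of_ne D (Finset.notMem_singleton.1 (Finset.mem_compl.1 hj)) y
  rw [dsWeight, dsWeight, Fintype.prod_eq_mul_prod_compl i,
    Fintype.prod_eq_mul_prod_compl (a := i) (M := ℝ),
    Finset.prod_congr rfl fun j hj => by rw [rest j hj], setNext_apply_self]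
  ring

variable [Fintype 𝒮] [Fintype 𝒜] [Fintype ℬ]

lemma dsWeight_nonneg (hd : IsDist3 d) (hP : IsKernel P) (D : Dataset 𝒮 𝒜 ℬ N) :
    0 ≤ dsWeight d P D :=
  Finset.prod_nonneg fun _ _ => mul_nonneg (hd.1 _ _ _) ((hP _ _ _).1 _)

lemma dsExp_mono (hd : IsDist3 d) (hP : IsKernel P) {f g : Dataset 𝒮 𝒜 ℬ N → ℝ}
    (h : ∀ D, f D ≤ g D) : dsExp d P f ≤ dsExp d P g :=
  Finset.sum_le_sum fun D _ => mul_le_mul_of_nonneg_left (h D) (dsWeight_nonneg hd hP D)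

lemma dsExp_const_mul (c : ℝ) (f : Dataset 𝒮 𝒜 ℬ N → ℝ) :
    dsExp d P (fun D => c * f D) = c * dsExp d P f := by
  simp only [dsExp, Finset.mul_sum, mul_left_comm]

lemma dsExp_sum {ι : Type*} (J : Finset ι) (f : ι → Dataset 𝒮 𝒜 ℬ N → ℝ) :
    dsExp d P (fun D => ∑ j ∈ J, f j D) = ∑ j ∈ J, dsExp d P (f j) := by
  simp only [dsExp, Finset.mul_sum]
  exact Finset.sum_comm

lemma dsExp_one (hd : IsDist3 d) (hP : IsKernel P) :
    dsExp d P (fun _ : Dataset 𝒮 𝒜 ℬ N => 1) = 1 := by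
  have single : ∑ z : 𝒮 × 𝒜 × ℬ × 𝒮, d z.1 z.2.1 z.2.2.1 * P z.1 z.2.1 z.2.2.1 z.2.2.2 = 1 := by
    simp only [Fintype.sum_prod_type, ← Finset.mul_sum, (hP _ _ _).2, mul_one, hd.2]
  simp only [dsExp, dsWeight, mul_one]
  rw [← Finset.prod_const_one (s := (Finset.univ : Finset (Fin N))), ← single,
    ← Fintype.prod_sum fun (_ : Fin N) (z : 𝒮 × 𝒜 × ℬ × 𝒮) =>
      d z.1 z.2.1 z.2.2.1 * P z.1 z.2.1 z.2.2.1 z.2.2.2]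

lemma dsProb_eq_dsExp (E : Set (Dataset 𝒮 𝒜 ℬ N)) :
    dsProb d P E = dsExp d P (E.indicator fun _ => 1) := by
  simp only [dsProb, dsExp, Set.indicator_apply, mul_ite, mul_one, mul_zero]

lemma dsProb_le_dsExp (hd : IsDist3 d) (hP : IsKernel P) {E : Set (Dataset 𝒮 𝒜 ℬ N)}
    {f : Dataset 𝒮 𝒜 ℬ N → ℝ} (hf : ∀ D, 0 ≤ f D) (hE : ∀ D ∈ E, 1 ≤ f D) :
    dsProb d P E ≤ dsExp d P f :=
  (dsProb_eq_dsExp E).trans_le <| dsExp_mono hd hP fun D =>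
    Set.indicator_apply_le' (hE D) fun _ => hf D

lemma dsProb_mono (hd : IsDist3 d) (hP : IsKernel P) {E F : Set (Dataset 𝒮 𝒜 ℬ N)}
    (h : E ⊆ F) : dsProb d P E ≤ dsProb d P F :=
  Finset.sum_le_sum fun D _ => Set.indicator_le_indicator_of_subset h (dsWeight_nonneg hd hP) D

lemma dsProb_add_dsProb_compl (hd : IsDist3 d) (hP : IsKernel P) (E : Set (Dataset 𝒮 𝒜 ℬ N)) :
    dsProb d P E + dsProb d P Eᶜ = 1 := by
  rw [← dsExp_one hd hP, dsProb, dsProb, ← Finset.sum_add_distrib]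
  exact Finset.sum_congr rfl fun D _ => by rw [Set.indicator_self_add_compl_apply, mul_one]

lemma dsProb_exists_le_sum (hd : IsDist3 d) (hP : IsKernel P) {ι : Type*} [Fintype ι]
    (E : ι → Set (Dataset 𝒮 𝒜 ℬ N)) :
    dsProb d P {D | ∃ j, D ∈ E j} ≤ ∑ j, dsProb d P (E j) := by
  have indicator_nonneg : ∀ j D, 0 ≤ (E j).indicator (fun _ => (1 : ℝ)) D := fun j =>
    Set.indicator_nonneg fun _ _ => zero_le_one
  simp only [dsProb_eq_dsExp (E _), ← dsExp_sum]
  refine dsProb_le_dsExp hd hP (fun D => Finset.sum_nonneg fun j _ => indicator_nonneg j D) ?_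
  rintro D ⟨j, hj⟩
  exact (Set.indicator_of_mem hj _).symm.trans_le
    (Finset.single_le_sum (fun k _ => indicator_nonneg k D) (Finset.mem_univ j))

lemma dsExp_resample (hP : IsKernel P) (F : Dataset 𝒮 𝒜 ℬ N → ℝ) (i : Fin N) :
    dsExp d P F = dsExp d P fun D =>
      Pexp (P (D i).1 (D i).2.1 (D i).2.2.1) fun y => F (setNext D i y) := by
  let swapNext : Dataset 𝒮 𝒜 ℬ N × 𝒮 → Dataset 𝒮 𝒜 ℬ N × 𝒮 := fun x =>
    (setNext x.1 i x.2, (x.1 i).2.2.2)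
  have swapNext_involutive : Function.Involutive swapNext := fun ⟨D, y⟩ =>
    Prod.ext (setNext_setNext_next D i y) (by simp only [swapNext, setNext_apply_self])
  calc dsExp d P F
      = ∑ x : Dataset 𝒮 𝒜 ℬ N × 𝒮,
          dsWeight d P x.1 * P (x.1 i).1 (x.1 i).2.1 (x.1 i).2.2.1 x.2 * F x.1 := by
        simp only [Fintype.sum_prod_type, ← Finset.sum_mul, ← Finset.mul_sum, (hP _ _ _).2,
          mul_one, dsExp]
    _ = ∑ x : Dataset 𝒮 𝒜 ℬ N × 𝒮, dsWeight d P x.1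
          * P (x.1 i).1 (x.1 i).2.1 (x.1 i).2.2.1 x.2 * F (setNext x.1 i x.2) := by
        rw [← Equiv.sum_comp swapNext_involutive.toPerm]
        refine Finset.sum_congr rfl fun x _ => ?_
        simp only [Function.Involutive.coe_toPerm, swapNext, setNext_apply_self]
        rw [dsWeight_setNext_mul]
    _ = _ := by
        simp only [Fintype.sum_prod_type, dsExp, Pexp, Finset.mul_sum, mul_assoc]

variable [DecidableEq 𝒮] [DecidableEq 𝒜] [DecidableEq ℬ]

/-- Resampling the next state of a visit outside `J` bounds its factor by the mean of `g D`, and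
leaves `g D` and the other factors untouched. -/
lemma dsExp_mul_prod_visits_le (hd : IsDist3 d) (hP : IsKernel P) {s : 𝒮} {a : 𝒜} {b : ℬ}
    {h : Dataset 𝒮 𝒜 ℬ N → ℝ} {g : Dataset 𝒮 𝒜 ℬ N → 𝒮 → ℝ} (h₀ : ∀ D, 0 ≤ h D)
    (g₀ : ∀ D y, 0 ≤ g D y) (h_setNext : ∀ D i y, h (setNext D i y) = h D)
    (g_setNext : ∀ D, ∀ i ∈ visits D s a b, ∀ y, g (setNext D i y) = g D)
    (hmean : ∀ D, Pexp (P s a b) (g D) ≤ 1) (J : Finset (Fin N)) :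
    dsExp d P (fun D => h D * ∏ j ∈ visits D s a b ∩ J, g D (D j).2.2.2) ≤ dsExp d P h := by
  induction J using Finset.induction_on with
  | empty => simp only [Finset.inter_empty, Finset.prod_empty, mul_one, le_refl]
  | insert i J hi ih =>
    refine le_trans ?_ ih
    rw [dsExp_resample hP _ i, dsExp_resample hP (fun D => h D * ∏ j ∈ _ ∩ J, _) i]
    refine dsExp_mono hd hP fun D => ?_
    by_cases hD : i ∈ visits D s a b
    · obtain ⟨hs, ha, hb⟩ := mem_visits.1 hD
      have hiJ : i ∉ visits D s a b ∩ J := fun h => hi (Finset.mem_of_mem_inter_right h)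
      have split : ∀ y, ∏ j ∈ visits (setNext D i y) s a b ∩ insert i J, g D (setNext D i y j).2.2.2
          = g D y * ∏ j ∈ visits D s a b ∩ J, g D (D j).2.2.2 := fun y => by
        rw [← prod_visits_inter_setNext hi (g D) y, visits_setNext,
          Finset.inter_insert_of_mem hD, Finset.prod_insert hiJ, setNext_apply_self]
      simp only [h_setNext, g_setNext D i hD, prod_visits_inter_setNext hi, split, hs, ha, hb,
        mul_comm (g D _), ← mul_assoc (h D), Pexp_const_mul, Pexp_const (hP s a b)]
      exact mul_le_of_le_one_right
        (mul_nonneg (h₀ D) (Finset.prod_nonneg fun j _ => g₀ D _)) (hmean D)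
    · simp only [visits_setNext, Finset.inter_insert_of_notMem hD, le_refl]

end probability

section empiricalBernstein

lemma exp_sub_sq_le {x : ℝ} (hx : |x| ≤ 1 / 4) : Real.exp (x - x ^ 2) ≤ 1 + x := by
  have hx' : 0 < 1 + x := by linarith [(abs_le.1 hx).1]
  have taylor := Real.abs_log_sub_add_sum_range_le (x := -x) (by rw [abs_neg]; linarith) 2
  have remainder : |x| ^ (2 + 1) / (1 - |x|) ≤ x ^ 2 / 2 := by
    rw [div_le_iff₀ (by linarith), ← sq_abs]
    nlinarith [sq_nonneg |x|, abs_nonneg x]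
  rw [abs_neg, sub_neg_eq_add] at taylor
  have hlog := (abs_le.1 (taylor.trans remainder)).1
  norm_num [Finset.sum_range_succ] at hlog
  rw [← Real.le_log_iff_exp_le hx']
  linarith

lemma exists_grid_point {y c : ℝ} {N : ℕ} (hc : 0 < c) (hy : 0 ≤ y) (hyN : y < c * N) :
    ∃ k < N, c * k ≤ y ∧ y < c * (k + 1) :=
  ⟨⌊y / c⌋₊, (Nat.floor_lt (by positivity)).2 ((div_lt_iff₀' hc).2 hyN),
    (le_div_iff₀' hc).1 (Nat.floor_le (by positivity)),
    (div_lt_iff₀' hc).1 (Nat.lt_floor_add_one _)⟩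

/-- Up to constants, `q⁻¹` is the optimal exponent when `q` is `√(n v / L)`, at least `4 H`. -/
lemma deviation_le_of_exponent {x v H L n q : ℝ} (hL : 0 < L) (hn : 0 < n) (hv : 0 ≤ v)
    (hx₀ : 0 ≤ x) (hxH : x ≤ H) (hq₀ : 0 < q) (hqH : 4 * H ≤ q) (hq : √(n * v / L) ≤ q)
    (hq' : q ≤ √(n * v / L) + 4 * H) (h : n * (q⁻¹ * x - q⁻¹ ^ 2 * (v + x ^ 2)) ≤ L) :
    x ≤ 4 * √(L * v / n) + 8 * (H * L / n) := by
  have hw : L / n * √(n * v / L) = √(L * v / n) := by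
    rw [← Real.sqrt_sq (div_pos hL hn).le, ← Real.sqrt_mul (sq_nonneg _)]
    congr 1
    field_simp
  have hvw : v ≤ √(L * v / n) * q := by
    calc v = √(L * v / n) * √(n * v / L) := by
          rw [← Real.sqrt_mul (by positivity), ← Real.sqrt_sq hv]
          congr 1
          rw [Real.sqrt_sq hv]
          field_simp
      _ ≤ √(L * v / n) * q := by gcongr
  have hxq : x ^ 2 ≤ x / 4 * q := by nlinarith
  have hLq : L / n * q ≤ √(L * v / n) + 4 * (H * L / n) := by
    calc L / n * q ≤ L / n * (√(n * v / L) + 4 * H) := by gcongr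
      _ = √(L * v / n) + 4 * (H * L / n) := by rw [mul_add, hw]; ring
  have hmul : x * q - v - x ^ 2 ≤ L / n * q * q := by
    have : n * (q⁻¹ * x - q⁻¹ ^ 2 * (v + x ^ 2)) = n * (x * q - v - x ^ 2) / q ^ 2 := by
      field_simp
      ring
    rw [this, div_le_iff₀ (by positivity)] at h
    rw [← mul_le_mul_iff_right₀ hn]
    exact h.trans_eq (by field_simp)
  have hdiv : x ≤ √(L * v / n) + x / 4 + L / n * q := le_of_mul_le_mul_right (by linarith) hq₀
  have : 0 ≤ H * L / n := by have := hx₀.trans hxH; positivity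
  linarith [Real.sqrt_nonneg (L * v / n)]

lemma deviation_le_of_forall_exponent {x v H L n : ℝ} {N : ℕ} (hH : 0 < H) (hv : 0 ≤ v)
    (hvH : v ≤ H ^ 2) (hx : x ≤ H) (hn : 1 ≤ n) (hnN : n ≤ N) (hL : 1 ≤ L)
    (h : ∀ k < N, n * ((4 * H * (k + 1))⁻¹ * x - (4 * H * (k + 1))⁻¹ ^ 2 * (v + x ^ 2)) ≤ L) :
    x ≤ 4 * √(L * v / n) + 8 * (H * L / n) := by
  have hn₀ : 0 < n := one_pos.trans_le hn
  have hL₀ : 0 < L := one_pos.trans_le hL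
  have hN : (1 : ℝ) ≤ N := hn.trans hnN
  rcases le_total x 0 with hx₀ | hx₀
  · exact hx₀.trans (by positivity)
  have hroot : √(n * v / L) < 4 * H * N := by
    refine (Real.sqrt_lt' (by positivity)).2 ?_
    calc n * v / L ≤ n * v := div_le_self (by positivity) hL
      _ ≤ N * H ^ 2 := by gcongr
      _ < (4 * H * N) ^ 2 := by
          nlinarith [mul_pos hH hH, mul_pos (mul_pos hH hH) (hn₀.trans_le hnN)]
  obtain ⟨k, hkN, hk, hk'⟩ := exists_grid_point (by positivity) (Real.sqrt_nonneg _) hroot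
  have hqH : 4 * H ≤ 4 * H * (k + 1) := le_mul_of_one_le_right (by positivity) (by simp)
  exact deviation_le_of_exponent hL₀ hn₀ hv hx₀ hx (by positivity) hqH hk'.le (by linarith)
    (h k hkN)

variable {𝒮 𝒜 ℬ : Type} [Fintype 𝒮]

lemma Pexp_exp_sub_sq_le {p V : 𝒮 → ℝ} {H t : ℝ} (hp : p ∈ stdSimplex ℝ 𝒮)
    (hV : ∀ s, V s ∈ Set.Icc 0 H) (ht : 0 ≤ t) (htH : t * H ≤ 1 / 4) :
    Pexp p (fun y => Real.exp (t * (Pexp p V - V y) - (t * (Pexp p V - V y)) ^ 2)) ≤ 1 := by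
  have hm₀ : 0 ≤ Pexp p V := le_Pexp hp fun s => (hV s).1
  have hm₁ : Pexp p V ≤ H := Pexp_le hp fun s => (hV s).2
  calc Pexp p (fun y => Real.exp (t * (Pexp p V - V y) - (t * (Pexp p V - V y)) ^ 2))
      ≤ Pexp p (fun y => t * (Pexp p V - V y) + 1) := Pexp_mono hp fun y => by
        rw [add_comm]
        refine exp_sub_sq_le (abs_le.2 ⟨?_, ?_⟩) <;> nlinarith [(hV y).1, (hV y).2]
    _ = 1 := by
        rw [Pexp_add_const hp, Pexp_const_mul, Pexp_sub, Pexp_const hp, sub_self, mul_zero,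
          zero_add]

variable [DecidableEq 𝒮] [DecidableEq 𝒜] [DecidableEq ℬ] {N : ℕ}

/-- The self-normalized deviation of the values of `W` sampled by the visits to `(s, a, b)` from
their mean under `p`: a sum of terms `t ξ - (t ξ)²`, each of exponential mean at most `1`. -/
def devStat (p W : 𝒮 → ℝ) (t : ℝ) (D : Dataset 𝒮 𝒜 ℬ N) (s : 𝒮) (a : 𝒜) (b : ℬ) : ℝ :=
  ∑ i ∈ visits D s a b,
    (t * (Pexp p W - W (D i).2.2.2) - (t * (Pexp p W - W (D i).2.2.2)) ^ 2)

lemma devStat_eq (p W : 𝒮 → ℝ) (t : ℝ) {D : Dataset 𝒮 𝒜 ℬ N} {s : 𝒮} {a : 𝒜} {b : ℬ}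
    (h : cnt D s a b ≠ 0) :
    devStat p W t D s a b = cnt D s a b * (t * (Pexp p W - Pexp (Phat D s a b) W)
      - t ^ 2 * (varP (Phat D s a b) W + (Pexp p W - Pexp (Phat D s a b) W) ^ 2)) := by
  have : Nonempty 𝒮 := ⟨s⟩
  have hPh := isKernel_Phat D s a b
  have linear : Pexp (Phat D s a b) (fun y => t * (Pexp p W - W y))
      = t * (Pexp p W - Pexp (Phat D s a b) W) := by
    rw [Pexp_const_mul, Pexp_sub, Pexp_const hPh]
  have quadratic : Pexp (Phat D s a b) (fun y => (t * (Pexp p W - W y)) ^ 2)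
      = t ^ 2 * (varP (Phat D s a b) W + (Pexp p W - Pexp (Phat D s a b) W) ^ 2) := by
    simp only [mul_pow, Pexp_const_mul, sub_sq_comm (Pexp p W), Pexp_sub_sq hPh]
  rw [devStat, ← cnt_mul_Pexp_Phat h fun y => t * (Pexp p W - W y) - (t * (Pexp p W - W y)) ^ 2,
    Pexp_sub, linear, quadratic]

variable [Fintype 𝒜] [Fintype ℬ] {d : 𝒮 → 𝒜 → ℬ → ℝ} {P : 𝒮 → 𝒜 → ℬ → 𝒮 → ℝ} {H t L : ℝ}

lemma dsExp_cnt_mul_exp_devStat_le (hd : IsDist3 d) (hP : IsKernel P) {s : 𝒮}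
    {W : Dataset 𝒮 𝒜 ℬ N → 𝒮 → ℝ} (hW : ∀ D s', W D s' ∈ Set.Icc 0 H)
    (hW' : ∀ D i y, (D i).1 = s → W (setNext D i y) = W D) (ht : 0 ≤ t) (htH : t * H ≤ 1 / 4)
    (a : 𝒜) (b : ℬ) :
    dsExp d P (fun D => cnt D s a b * Real.exp (devStat (P s a b) (W D) t D s a b))
      ≤ dsExp d P fun D : Dataset 𝒮 𝒜 ℬ N => (cnt D s a b : ℝ) := by
  have hmean := fun D => Pexp_exp_sub_sq_le (hP s a b) (hW D) ht htH
  have := dsExp_mul_prod_visits_le hd hP (fun D => Nat.cast_nonneg (cnt D s a b))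
    (fun _ _ => (Real.exp_pos _).le) (fun D i y => by rw [cnt_setNext])
    (fun D i hi y => by rw [hW' D i y (mem_visits.1 hi).1]) hmean Finset.univ
  simpa only [Finset.inter_univ, devStat, Real.exp_sum] using this

lemma dsProb_exists_lt_devStat_le (hd : IsDist3 d) (hP : IsKernel P)
    {W : 𝒮 → Dataset 𝒮 𝒜 ℬ N → 𝒮 → ℝ} (hW : ∀ s D s', W s D s' ∈ Set.Icc 0 H)
    (hW' : ∀ s D i y, (D i).1 = s → W s (setNext D i y) = W s D) (ht : 0 ≤ t)
    (htH : t * H ≤ 1 / 4) (L : ℝ) :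
    dsProb d P {D | ∃ s a b, cnt D s a b ≠ 0 ∧ L < devStat (P s a b) (W s D) t D s a b}
      ≤ N * Real.exp (-L) := by
  let f : 𝒮 × 𝒜 × ℬ → Dataset 𝒮 𝒜 ℬ N → ℝ := fun x D =>
    cnt D x.1 x.2.1 x.2.2
      * Real.exp (devStat (P x.1 x.2.1 x.2.2) (W x.1 D) t D x.1 x.2.1 x.2.2)
  have hf : ∀ x D, 0 ≤ f x D := fun x D => by positivity
  calc _ ≤ dsExp d P (fun D => Real.exp (-L) * ∑ x, f x D) := by
        refine dsProb_le_dsExp hd hP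
          (fun D => mul_nonneg (Real.exp_pos _).le (Finset.sum_nonneg fun x _ => hf x D)) ?_
        rintro D ⟨s, a, b, hc, hdev⟩
        rw [Real.exp_neg, ← div_eq_inv_mul, one_le_div (Real.exp_pos L)]
        calc Real.exp L ≤ 1 * Real.exp (devStat (P s a b) (W s D) t D s a b) := by
              rw [one_mul]
              exact Real.exp_le_exp.2 hdev.le
          _ ≤ f (s, a, b) D :=
              mul_le_mul_of_nonneg_right (Nat.one_le_cast.2 (Nat.one_le_iff_ne_zero.2 hc))
                (Real.exp_pos _).le
          _ ≤ ∑ x, f x D := Finset.single_le_sum (fun x _ => hf x D) (Finset.mem_univ _)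
    _ = Real.exp (-L) * ∑ x, dsExp d P (f x) := by rw [dsExp_const_mul, dsExp_sum]
    _ ≤ Real.exp (-L) * ∑ x : 𝒮 × 𝒜 × ℬ,
          dsExp d P (fun D : Dataset 𝒮 𝒜 ℬ N => (cnt D x.1 x.2.1 x.2.2 : ℝ)) := by
        gcongr with x
        exact dsExp_cnt_mul_exp_devStat_le hd hP (hW x.1) (hW' x.1) ht htH x.2.1 x.2.2
    _ = N * Real.exp (-L) := by
        have total : (fun D : Dataset 𝒮 𝒜 ℬ N =>
            ∑ x : 𝒮 × 𝒜 × ℬ, (cnt D x.1 x.2.1 x.2.2 : ℝ)) = fun _ => (N : ℝ) * 1 := by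
          funext D
          rw [mul_one, ← Nat.cast_sum, Fintype.sum_prod_type]
          simp only [Fintype.sum_prod_type, sum_cnt]
        rw [← dsExp_sum, total, dsExp_const_mul, dsExp_one hd hP, mul_one, mul_comm]

/-- An empirical Bernstein inequality. Each `W j s` may depend on the dataset, but not on the next
states of the transitions out of `s`. -/
theorem dsProb_exists_lt_deviation_le (hd : IsDist3 d) (hP : IsKernel P) {ι : Type*} [Fintype ι]
    {W : ι → 𝒮 → Dataset 𝒮 𝒜 ℬ N → 𝒮 → ℝ} (hH : 0 < H) (hL : 1 ≤ L)
    (hW : ∀ j s D s', W j s D s' ∈ Set.Icc 0 H)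
    (hW' : ∀ j s D i y, (D i).1 = s → W j s (setNext D i y) = W j s D) :
    dsProb d P {D | ∃ j s a b, cnt D s a b ≠ 0 ∧
        4 * √(L * varP (Phat D s a b) (W j s D) / cnt D s a b) + 8 * (H * L / cnt D s a b)
          < Pexp (P s a b) (W j s D) - Pexp (Phat D s a b) (W j s D)}
      ≤ Fintype.card ι * N * N * Real.exp (-L) := by
  let t : Fin N → ℝ := fun k => (4 * H * (k + 1))⁻¹
  let bad : ι × Fin N → Set (Dataset 𝒮 𝒜 ℬ N) := fun x => {D | ∃ s a b, cnt D s a b ≠ 0 ∧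
    L < devStat (P s a b) (W x.1 s D) (t x.2) D s a b}
  have hsub : {D | ∃ j s a b, cnt D s a b ≠ 0 ∧
      4 * √(L * varP (Phat D s a b) (W j s D) / cnt D s a b) + 8 * (H * L / cnt D s a b)
        < Pexp (P s a b) (W j s D) - Pexp (Phat D s a b) (W j s D)} ⊆ {D | ∃ x, D ∈ bad x} := by
    rintro D ⟨j, s, a, b, hc, hdev⟩
    have : Nonempty 𝒮 := ⟨s⟩
    have hPh := isKernel_Phat D s a b
    contrapose! hdev
    refine deviation_le_of_forall_exponent (N := N) hH (varP_nonneg hPh _)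
      (varP_le_sq hPh (hW j s D)) ?_ (Nat.one_le_cast.2 (Nat.one_le_iff_ne_zero.2 hc))
      (Nat.cast_le.2 (cnt_le D s a b)) hL fun k hk => ?_
    · linarith [Pexp_le (hP s a b) fun s' => (hW j s D s').2, le_Pexp hPh fun s' => (hW j s D s').1]
    · rw [← devStat_eq _ _ _ hc]
      exact not_lt.1 fun h => hdev ⟨(j, ⟨k, hk⟩), s, a, b, hc, h⟩
  have htH : ∀ k, t k * H ≤ 1 / 4 := fun k => by
    have : (1 : ℝ) ≤ k + 1 := le_add_of_nonneg_left (Nat.cast_nonneg _)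
    rw [inv_mul_le_iff₀ (by positivity)]
    nlinarith
  calc _ ≤ ∑ x, dsProb d P (bad x) :=
        (dsProb_mono hd hP hsub).trans (dsProb_exists_le_sum hd hP bad)
    _ ≤ ∑ _x : ι × Fin N, N * Real.exp (-L) := Finset.sum_le_sum fun x _ =>
        dsProb_exists_lt_devStat_le hd hP (hW x.1) (hW' x.1) (by positivity) (htH x.2) L
    _ = Fintype.card ι * N * N * Real.exp (-L) := by
        rw [Finset.sum_const, Finset.card_univ, Fintype.card_prod, Fintype.card_fin, nsmul_eq_mul,
          Nat.cast_mul, mul_assoc _ (N : ℝ) (Real.exp _)]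

end empiricalBernstein

section valueGrid

variable {γ : ℝ} {N : ℕ}

/-- The multiples of `1/(2N)` in `[0, 1/(1-γ)]`, a net of the possible values of a state. -/
def valueGrid (γ : ℝ) (N : ℕ) : Finset ℝ :=
  (Finset.range (⌊2 * N * (1 / (1 - γ))⌋₊ + 1)).image fun m : ℕ => 1 / (2 * N) * (m : ℝ)

lemma mem_Icc_of_mem_valueGrid (hγ : γ < 1) (hN : N ≠ 0) {u : ℝ} (hu : u ∈ valueGrid γ N) :
    u ∈ Set.Icc 0 (1 / (1 - γ)) := by
  obtain ⟨m, hm, rfl⟩ := Finset.mem_image.1 hu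
  have : 0 < 1 - γ := sub_pos.2 hγ
  have : (0 : ℝ) < N := Nat.cast_pos.2 (Nat.pos_of_ne_zero hN)
  have hm' : (m : ℝ) ≤ 2 * N * (1 / (1 - γ)) :=
    (Nat.le_floor_iff (by positivity)).1 (Finset.mem_range_succ_iff.1 hm)
  refine ⟨by positivity, ?_⟩
  rwa [one_div_mul_eq_div, div_le_iff₀' (by positivity)]

lemma exists_mem_valueGrid_abs_sub_le (hN : N ≠ 0) {v : ℝ} (hv : v ∈ Set.Icc 0 (1 / (1 - γ))) :
    ∃ u ∈ valueGrid γ N, |u - v| ≤ 1 / (2 * N) := by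
  have : (0 : ℝ) < N := Nat.cast_pos.2 (Nat.pos_of_ne_zero hN)
  have hlt : v < 1 / (2 * N) * ((⌊2 * N * (1 / (1 - γ))⌋₊ + 1 : ℕ) : ℝ) := by
    rw [one_div_mul_eq_div, lt_div_iff₀' (by positivity), Nat.cast_succ]
    exact (mul_le_mul_of_nonneg_left hv.2 (by positivity)).trans_lt (Nat.lt_floor_add_one _)
  obtain ⟨m, hm, hmv, hvm⟩ := exists_grid_point (by positivity) hv.1 hlt
  refine ⟨_, Finset.mem_image_of_mem _ (Finset.mem_range.2 hm), abs_le.2 ⟨by linarith, ?_⟩⟩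
  have : 0 < 1 / (2 * (N : ℝ)) := by positivity
  linarith

lemma card_valueGrid_le (hγ : γ < 1) : ((valueGrid γ N).card : ℝ) ≤ 2 * N * (1 / (1 - γ)) + 1 := by
  have : 0 < 1 - γ := sub_pos.2 hγ
  calc ((valueGrid γ N).card : ℝ) ≤ (⌊2 * N * (1 / (1 - γ))⌋₊ + 1 : ℕ) :=
        Nat.cast_le.2 (Finset.card_image_le.trans_eq (Finset.card_range _))
    _ ≤ 2 * N * (1 / (1 - γ)) + 1 := by
        rw [Nat.cast_succ]
        gcongr
        exact Nat.floor_le (by positivity)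

end valueGrid

section constants

variable {γ δ : ℝ} {N : ℕ}

lemma two_le_one_div_one_sub (hγ₂ : 1 / 2 ≤ γ) (hγ : γ < 1) : 2 ≤ 1 / (1 - γ) := by
  rw [le_div_iff₀ (sub_pos.2 hγ)]
  linarith

lemma half_le_log_div (hγ₂ : 1 / 2 ≤ γ) (hγ : γ < 1) (hδ : δ ∈ Set.Ioo (0 : ℝ) 1) (hN : N ≠ 0) :
    1 / 2 ≤ Real.log (N / ((1 - γ) * δ)) := by
  have hN' : (1 : ℝ) ≤ N := Nat.one_le_cast.2 (Nat.one_le_iff_ne_zero.2 hN)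
  have two_le : 2 ≤ N / ((1 - γ) * δ) := by
    rw [le_div_iff₀ (mul_pos (sub_pos.2 hγ) hδ.1)]
    nlinarith [hδ.1, hδ.2]
  linarith [Real.log_two_gt_d9, Real.log_le_log two_pos two_le]

lemma card_valueGrid_mul_exp_le (hγ₂ : 1 / 2 ≤ γ) (hγ : γ < 1) (hδ : δ ∈ Set.Ioo (0 : ℝ) 1)
    (hN : N ≠ 0) :
    (valueGrid γ N).card * N * N * Real.exp (-(4 * Real.log (N / ((1 - γ) * δ)))) ≤ δ := by
  have hN' : (1 : ℝ) ≤ N := Nat.one_le_cast.2 (Nat.one_le_iff_ne_zero.2 hN)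
  have hγ' : 0 < 1 - γ := sub_pos.2 hγ
  obtain ⟨hδ₀, hδ₁⟩ := hδ
  have hcard := card_valueGrid_le (N := N) hγ
  rw [mul_assoc] at hcard
  have hNx : 2 * (N : ℝ) ≤ N * (1 / (1 - γ)) := by nlinarith [two_le_one_div_one_sub hγ₂ hγ]
  have hexp : Real.exp (-(4 * Real.log (N / ((1 - γ) * δ)))) = (δ / (N * (1 / (1 - γ)))) ^ 4 := by
    rw [← mul_neg, ← Real.log_inv, show (4 : ℝ) = (4 : ℕ) by norm_num, ← Real.log_pow,
      Real.exp_log (by positivity)]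
    congr 1
    field_simp
  rw [hexp]
  set x : ℝ := N * (1 / (1 - γ))
  have hx : 2 ≤ x := by linarith
  rw [div_pow, mul_div_assoc', div_le_iff₀ (by positivity), mul_comm δ]
  have hgrid : (valueGrid γ N).card * N * N ≤ x ^ 4 := by
    calc ((valueGrid γ N).card * N * N : ℝ) ≤ (2 * x + x) * (x / 2) * (x / 2) := by
          gcongr <;> linarith
      _ ≤ x ^ 4 := by nlinarith [pow_pos (two_pos.trans_le hx) 3]
  gcongr
  exact pow_le_of_le_one hδ₀.le hδ₁.le (by norm_num)

lemma deviation_le_max {x v w H L n Cb : ℝ} (hCb : 256 ≤ Cb) (hv : 0 ≤ v)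
    (hwv : w ≤ 2 * v + 2 * (3 / (2 * n)) ^ 2) (hH : 2 ≤ H) (hL : 1 / 2 ≤ L) (hn : 1 ≤ n)
    (hx : x ≤ 4 * √(4 * L * w / n) + 8 * (H * (4 * L) / n)) :
    x ≤ max (√(Cb * L / n * v)) (2 * (Cb * L / n) * H) := by
  have hn₀ : 0 < n := one_pos.trans_le hn
  have hL₀ : 0 < L := by linarith
  have hroot : √(4 * L * w / n) ≤ 3 * √(L / n * v) + 6 * (L / n) := by
    refine Real.sqrt_le_iff.2 ⟨by positivity, ?_⟩
    have cubic : L / n ^ 3 ≤ 2 * (L / n) ^ 2 := by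
      rw [div_pow, ← mul_div_assoc, div_le_div_iff₀ (by positivity) (by positivity)]
      nlinarith [show 0 < L * n ^ 2 by positivity, mul_le_mul hL hn zero_le_one hL₀.le]
    calc 4 * L * w / n ≤ 4 * L * (2 * v + 2 * (3 / (2 * n)) ^ 2) / n := by gcongr
      _ = 8 * (L / n * v) + 18 * (L / n ^ 3) := by field_simp; ring
      _ ≤ (3 * √(L / n * v)) ^ 2 + (6 * (L / n)) ^ 2 := by
          rw [mul_pow, Real.sq_sqrt (by positivity)]
          nlinarith [show 0 ≤ L / n * v by positivity]
      _ ≤ (3 * √(L / n * v) + 6 * (L / n)) ^ 2 := by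
          nlinarith [show 0 ≤ √(L / n * v) * (L / n) by positivity]
  have hHL : 2 * (L / n) ≤ L / n * H := by
    rw [mul_comm]
    gcongr
  have sqrt_part : 16 * √(L / n * v) ≤ √(Cb * L / n * v) := by
    refine Real.le_sqrt_of_sq_le ?_
    rw [mul_pow, Real.sq_sqrt (by positivity), mul_div_assoc, mul_assoc Cb]
    gcongr
    linarith
  have linear_part : 512 * (L / n * H) ≤ 2 * (Cb * L / n) * H := by
    rw [show 2 * (Cb * L / n) * H = 2 * Cb * (L / n * H) by ring]
    gcongr
    linarith
  rw [show 8 * (H * (4 * L) / n) = 32 * (L / n * H) by ring] at hx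
  linarith [Real.sqrt_nonneg (Cb * L / n * v),
    le_max_left (√(Cb * L / n * v)) (2 * (Cb * L / n) * H),
    le_max_right (√(Cb * L / n * v)) (2 * (Cb * L / n) * H)]

end constants

section leaveOneOut

variable {𝒮 𝒜 ℬ : Type} [Fintype 𝒮] [Fintype 𝒜] [Fintype ℬ] [DecidableEq 𝒮] [DecidableEq 𝒜]
  [DecidableEq ℬ] {γ δ Cb u : ℝ} {r : 𝒮 → 𝒜 → ℬ → ℝ} {N : ℕ}

/-- The operator `T̂⁻` built from the dataset `D`. -/
def empiricalTpeMinus (γ δ Cb : ℝ) (r : 𝒮 → 𝒜 → ℬ → ℝ) (D : Dataset 𝒮 𝒜 ℬ N) :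
    (𝒮 → 𝒜 → ℬ → ℝ) → 𝒮 → 𝒜 → ℬ → ℝ :=
  TpeMinus γ δ Cb N (cnt D) (Phat D) (rhat r D)

/-- The leave-one-out value function: the fixed value of `T̂⁻` with `s` made absorbing, of value
`u`. -/
def looValue (γ δ Cb : ℝ) (r : 𝒮 → 𝒜 → ℬ → ℝ) (u : ℝ) (s : 𝒮) (D : Dataset 𝒮 𝒜 ℬ N) : 𝒮 → ℝ :=
  valQ (fixedQ γ (freezeAt s u (empiricalTpeMinus γ δ Cb r D)))

lemma looValue_setNext {s : 𝒮} {D : Dataset 𝒮 𝒜 ℬ N} {i : Fin N} (h : (D i).1 = s) (y : 𝒮) :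
    looValue γ δ Cb r u s (setNext D i y) = looValue γ δ Cb r u s D := by
  have operator_eq : freezeAt s u (empiricalTpeMinus γ δ Cb r (setNext D i y))
      = freezeAt s u (empiricalTpeMinus γ δ Cb r D) := by
    funext Q s'
    rcases eq_or_ne s' s with rfl | hs
    · simp only [freezeAt, Function.update_self]
    · have hne : (D i).1 ≠ s' := fun hs' => hs (hs'.symm.trans h)
      funext a b
      simp only [freezeAt, Function.update_of_ne hs, empiricalTpeMinus, TpeMinus, rhat,
        cnt_setNext, Phat_setNext hne]
  rw [looValue, operator_eq, looValue]

variable [Nonempty 𝒜] [Nonempty ℬ]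

lemma isValueContraction_empiricalTpeMinus [Nonempty 𝒮] (hγ₂ : 1 / 2 ≤ γ) (hγ : γ < 1)
    (hr : IsReward r) (D : Dataset 𝒮 𝒜 ℬ N) :
    IsValueContraction γ (empiricalTpeMinus γ δ Cb r D) :=
  isValueContraction_TpeMinus hγ₂ hγ (isKernel_Phat D) (isReward_rhat hr D)

lemma looValue_mem_Icc (hγ₂ : 1 / 2 ≤ γ) (hγ : γ < 1) (hr : IsReward r)
    (hu : u ∈ Set.Icc 0 (1 / (1 - γ))) (s : 𝒮) (D : Dataset 𝒮 𝒜 ℬ N) (s' : 𝒮) :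
    looValue γ δ Cb r u s D s' ∈ Set.Icc 0 (1 / (1 - γ)) := by
  have : Nonempty 𝒮 := ⟨s⟩
  have hγ₀ : 0 ≤ γ := by linarith
  have hT := isValueContraction_empiricalTpeMinus (δ := δ) (Cb := Cb) hγ₂ hγ hr D
  exact valQ_mem_Icc_of_mem_qBox
    ((isValueContraction_freezeAt hT hγ₀ hu s).fixedQ_spec hγ₀ hγ).1 s'

lemma QpeMinus_mem_qBox [Nonempty 𝒮] (hγ₂ : 1 / 2 ≤ γ) (hγ : γ < 1) (hr : IsReward r)
    (D : Dataset 𝒮 𝒜 ℬ N) : QpeMinus γ δ Cb r D ∈ qBox γ :=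
  (isValueContraction_empiricalTpeMinus hγ₂ hγ hr D).mapsTo.iterate _ (zero_mem_qBox hγ)

lemma abs_empiricalTpeMinus_QpeMinus_sub_le [Nonempty 𝒮] (hγ₂ : 1 / 2 ≤ γ) (hγ : γ < 1)
    (hN : N ≠ 0) (hr : IsReward r) (D : Dataset 𝒮 𝒜 ℬ N) (s : 𝒮) (a : 𝒜) (b : ℬ) :
    |empiricalTpeMinus γ δ Cb r D (QpeMinus γ δ Cb r D) s a b - QpeMinus γ δ Cb r D s a b|
      ≤ 1 / N := by
  have hT := isValueContraction_empiricalTpeMinus (δ := δ) (Cb := Cb) hγ₂ hγ hr D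
  have hzero := zero_mem_qBox (𝒮 := 𝒮) (𝒜 := 𝒜) (ℬ := ℬ) hγ
  have := hT.abs_iterate_sub_iterate_le (hT.mapsTo hzero) hzero (Titer γ N) s a b
  rw [← Function.iterate_succ_apply, Function.iterate_succ_apply'] at this
  exact this.trans (pow_Titer_mul_le (by linarith) hγ hN)

lemma exists_abs_looValue_sub_valQ_QpeMinus_le (hγ₂ : 1 / 2 ≤ γ) (hγ : γ < 1) (hN : N ≠ 0)
    (hr : IsReward r) (D : Dataset 𝒮 𝒜 ℬ N) (s : 𝒮) :
    ∃ u ∈ valueGrid γ N, ∀ s',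
      |looValue γ δ Cb r u s D s' - valQ (QpeMinus γ δ Cb r D) s'| ≤ 3 / (2 * N) := by
  have : Nonempty 𝒮 := ⟨s⟩
  have hγ₀ : 0 < γ := by linarith
  have hT := isValueContraction_empiricalTpeMinus (δ := δ) (Cb := Cb) hγ₂ hγ hr D
  obtain ⟨hQ, hfix⟩ := hT.fixedQ_spec hγ₀.le hγ
  have algorithm_error : ∀ s', |valQ (fixedQ γ (empiricalTpeMinus γ δ Cb r D)) s'
      - valQ (QpeMinus γ δ Cb r D) s'| ≤ 1 / N := fun s' => abs_valQ_sub_valQ_le fun a b => by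
    have := hT.abs_iterate_sub_iterate_le hQ (zero_mem_qBox hγ) (Titer γ N) s' a b
    rw [hfix.iterate] at this
    exact this.trans (pow_Titer_mul_le hγ₀ hγ hN)
  obtain ⟨u, hu, grid_error⟩ :=
    exists_mem_valueGrid_abs_sub_le hN (valQ_mem_Icc_of_mem_qBox hQ s)
  refine ⟨u, hu, fun s' => ?_⟩
  have frozen_error := (hT.abs_valQ_fixedQ_freezeAt_sub_le hγ₀.le hγ
    (mem_Icc_of_mem_valueGrid hγ hN hu) s s').trans grid_error
  calc _ ≤ 1 / (2 * (N : ℝ)) + 1 / N :=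
        (abs_sub_le _ _ _).trans (add_le_add frozen_error (algorithm_error s'))
    _ = 3 / (2 * N) := by field_simp; norm_num

end leaveOneOut

section lowerBound

variable {𝒮 𝒜 ℬ : Type} [Fintype 𝒮] [Fintype 𝒜] [Fintype ℬ] [DecidableEq 𝒮] [DecidableEq 𝒜]
  [DecidableEq ℬ] {γ δ Cb : ℝ} {r : 𝒮 → 𝒜 → ℬ → ℝ} {P : 𝒮 → 𝒜 → ℬ → 𝒮 → ℝ} {N : ℕ}

/-- The good event: along every leave-one-out value function whose frozen value lies on the grid,
the empirical transitions satisfy the Bernstein bound. -/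
def IsConcentrated (γ δ Cb : ℝ) (r : 𝒮 → 𝒜 → ℬ → ℝ) (P : 𝒮 → 𝒜 → ℬ → 𝒮 → ℝ)
    (D : Dataset 𝒮 𝒜 ℬ N) : Prop :=
  ∀ u ∈ valueGrid γ N, ∀ s a b, cnt D s a b ≠ 0 →
    Pexp (P s a b) (looValue γ δ Cb r u s D) - Pexp (Phat D s a b) (looValue γ δ Cb r u s D)
      ≤ 4 * √(4 * Real.log (N / ((1 - γ) * δ))
            * varP (Phat D s a b) (looValue γ δ Cb r u s D) / cnt D s a b)
        + 8 * (1 / (1 - γ) * (4 * Real.log (N / ((1 - γ) * δ))) / cnt D s a b)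

lemma isConcentrated_of_eq_zero (hN : N = 0) (D : Dataset 𝒮 𝒜 ℬ N) :
    IsConcentrated γ δ Cb r P D := fun _ _ s a b hc =>
  absurd (Nat.le_zero.1 ((cnt_le D s a b).trans_eq hN)) hc

variable [Nonempty 𝒜] [Nonempty ℬ]

theorem one_sub_le_dsProb_isConcentrated {d : 𝒮 → 𝒜 → ℬ → ℝ} (hd : IsDist3 d) (hP : IsKernel P)
    (hγ₂ : 1 / 2 ≤ γ) (hγ : γ < 1) (hδ : δ ∈ Set.Ioo (0 : ℝ) 1) (hr : IsReward r) :
    1 - δ ≤ dsProb d P {D : Dataset 𝒮 𝒜 ℬ N | IsConcentrated γ δ Cb r P D} := by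
  have total := dsProb_add_dsProb_compl hd hP {D : Dataset 𝒮 𝒜 ℬ N | IsConcentrated γ δ Cb r P D}
  suffices dsProb d P {D : Dataset 𝒮 𝒜 ℬ N | IsConcentrated γ δ Cb r P D}ᶜ ≤ δ by linarith
  rcases eq_or_ne N 0 with hN | hN
  · have : {D : Dataset 𝒮 𝒜 ℬ N | IsConcentrated γ δ Cb r P D}ᶜ = ∅ :=
      Set.compl_empty_iff.2 (Set.eq_univ_of_forall (isConcentrated_of_eq_zero hN))
    simpa only [this, dsProb, Set.indicator_empty, Finset.sum_const_zero] using hδ.1.le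
  · have bernstein := dsProb_exists_lt_deviation_le (N := N) hd hP (ι := valueGrid γ N)
      (W := fun u s D => looValue γ δ Cb r u.1 s D) (one_div_pos.2 (sub_pos.2 hγ))
      (by linarith [half_le_log_div hγ₂ hγ hδ hN] : 1 ≤ 4 * Real.log (N / ((1 - γ) * δ)))
      (fun u => looValue_mem_Icc hγ₂ hγ hr (mem_Icc_of_mem_valueGrid hγ hN u.2))
      (fun u s D i y h => looValue_setNext h y)
    rw [Fintype.card_coe] at bernstein
    refine le_trans (dsProb_mono hd hP fun D hD => ?_)
      (bernstein.trans (card_valueGrid_mul_exp_le hγ₂ hγ hδ hN))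
    contrapose! hD
    exact not_not_intro fun u hu s a b hc => not_lt.1 fun h => hD ⟨⟨u, hu⟩, s, a, b, hc, h⟩

lemma Pexp_sub_Pexp_Phat_le_penalty (hγ₂ : 1 / 2 ≤ γ) (hγ : γ < 1) (hδ : δ ∈ Set.Ioo (0 : ℝ) 1)
    (hCb : 256 ≤ Cb) (hr : IsReward r) (hP : IsKernel P) {D : Dataset 𝒮 𝒜 ℬ N}
    (hD : IsConcentrated γ δ Cb r P D) {s : 𝒮} {a : 𝒜} {b : ℬ} (hc : cnt D s a b ≠ 0) :
    Pexp (P s a b) (valQ (QpeMinus γ δ Cb r D))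
        - Pexp (Phat D s a b) (valQ (QpeMinus γ δ Cb r D))
      ≤ penalty γ δ Cb N (cnt D s a b) (Phat D s a b) (valQ (QpeMinus γ δ Cb r D)) - 1 / N := by
  have : Nonempty 𝒮 := ⟨s⟩
  have hn : (1 : ℝ) ≤ cnt D s a b := Nat.one_le_cast.2 (Nat.one_le_iff_ne_zero.2 hc)
  have hnN : (cnt D s a b : ℝ) ≤ N := Nat.cast_le.2 (cnt_le D s a b)
  have hN : N ≠ 0 := ((Nat.pos_of_ne_zero hc).trans_le (cnt_le D s a b)).ne'
  have hPh := isKernel_Phat D s a b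
  obtain ⟨u, hu, hW⟩ :=
    exists_abs_looValue_sub_valQ_QpeMinus_le (δ := δ) (Cb := Cb) hγ₂ hγ hN hr D s
  have hdev := hD u hu s a b hc
  set W := looValue γ δ Cb r u s D
  set V := valQ (QpeMinus γ δ Cb r D)
  have hV : ∀ s', V s' ∈ Set.Icc 0 (1 / (1 - γ)) :=
    valQ_mem_Icc_of_mem_qBox (QpeMinus_mem_qBox hγ₂ hγ hr D)
  have hvar : varP (Phat D s a b) W
      ≤ 2 * varP (Phat D s a b) V + 2 * (3 / (2 * (cnt D s a b : ℝ))) ^ 2 :=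
    varP_le_two_mul_add hPh fun s' => (hW s').trans (by gcongr)
  have hbern := deviation_le_max hCb (varP_nonneg hPh V) hvar (two_le_one_div_one_sub hγ₂ hγ)
    (half_le_log_div hγ₂ hγ hδ hN) hn hdev
  have true_error := abs_le.1 (abs_Pexp_sub_Pexp_le (hP s a b) hW)
  have empirical_error := abs_le.1 (abs_Pexp_sub_Pexp_le hPh hW)
  have slack : 3 / (2 * (N : ℝ)) + 3 / (2 * N) + 1 / N = 4 / N := by field_simp; norm_num
  have slack_pos : 0 < 1 / (N : ℝ) := by have := Nat.pos_of_ne_zero hN; positivity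
  rw [penalty_of_ne_zero hγ hc, ← sub_nonneg]
  rcases min_choice (max (√(Cb * Real.log (N / ((1 - γ) * δ)) / cnt D s a b
      * varP (Phat D s a b) V)) (2 * (Cb * Real.log (N / ((1 - γ) * δ)) / cnt D s a b)
      * (1 / (1 - γ)))) (1 / (1 - γ)) with h | h <;> rw [h]
  · linarith
  · have : 4 / (N : ℝ) = 4 * (1 / N) := by ring
    linarith [Pexp_le (hP s a b) fun s' => (hV s').2, le_Pexp hPh fun s' => (hV s').1]

lemma bellman_sub_two_mul_penalty_le_QpeMinus (hγ₂ : 1 / 2 ≤ γ) (hγ : γ < 1)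
    (hδ : δ ∈ Set.Ioo (0 : ℝ) 1) (hCb : 256 ≤ Cb) (hr : IsReward r) (hP : IsKernel P)
    {D : Dataset 𝒮 𝒜 ℬ N} (hD : IsConcentrated γ δ Cb r P D) (s : 𝒮) (a : 𝒜) (b : ℬ) :
    r s a b + γ * Pexp (P s a b) (valQ (QpeMinus γ δ Cb r D))
        - 2 * penalty γ δ Cb N (cnt D s a b) (Phat D s a b) (valQ (QpeMinus γ δ Cb r D))
      ≤ QpeMinus γ δ Cb r D s a b := by
  have : Nonempty 𝒮 := ⟨s⟩
  have hQ := QpeMinus_mem_qBox (δ := δ) (Cb := Cb) hγ₂ hγ hr D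
  by_cases hc : cnt D s a b = 0
  · have hmean := Pexp_le (hP s a b) fun s' => (valQ_mem_Icc_of_mem_qBox hQ s').2
    have hH := two_le_one_div_one_sub hγ₂ hγ
    rw [hc, penalty_zero_count]
    have : 0 ≤ 4 / (N : ℝ) := by positivity
    nlinarith [(hr s a b).2, (hQ s a b).1]
  · have hN : N ≠ 0 := ((Nat.pos_of_ne_zero hc).trans_le (cnt_le D s a b)).ne'
    have transition_error := Pexp_sub_Pexp_Phat_le_penalty hγ₂ hγ hδ hCb hr hP hD hc
    have residual := (abs_le.1 (abs_empiricalTpeMinus_QpeMinus_sub_le (δ := δ) (Cb := Cb)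
      hγ₂ hγ hN hr D s a b)).2
    have one_step : r s a b + γ * Pexp (Phat D s a b) (valQ (QpeMinus γ δ Cb r D))
        - penalty γ δ Cb N (cnt D s a b) (Phat D s a b) (valQ (QpeMinus γ δ Cb r D))
        ≤ empiricalTpeMinus γ δ Cb r D (QpeMinus γ δ Cb r D) s a b := by
      rw [empiricalTpeMinus, TpeMinus, rhat, if_neg hc]
      exact le_max_left _ _
    have hpen := four_div_le_penalty (δ := δ) (Cb := Cb) (N := N) (n := cnt D s a b)
      (p := Phat D s a b) (V := valQ (QpeMinus γ δ Cb r D)) hγ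
    have : 4 / (N : ℝ) = 4 * (1 / N) := by ring
    have : 0 ≤ 1 / (N : ℝ) := by positivity
    nlinarith

end lowerBound

theorem statement8_general {𝒮 𝒜 ℬ : Type} [Fintype 𝒮] [Fintype 𝒜] [Fintype ℬ] [DecidableEq 𝒮]
    [DecidableEq 𝒜] [DecidableEq ℬ] [Nonempty 𝒜] [Nonempty ℬ] {γ δ Cb : ℝ}
    (hγ₂ : 1 / 2 ≤ γ) (hγ : γ < 1) (hδ : δ ∈ Set.Ioo (0 : ℝ) 1) (hCb : 256 ≤ Cb)
    {P : 𝒮 → 𝒜 → ℬ → 𝒮 → ℝ} (hP : IsKernel P) {r : 𝒮 → 𝒜 → ℬ → ℝ} (hr : IsReward r)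
    {db : 𝒮 → 𝒜 → ℬ → ℝ} (hdb : IsDist3 db) (N : ℕ) :
    1 - δ ≤ dsProb db P {D : Fin N → 𝒮 × 𝒜 × ℬ × 𝒮 |
      ∀ μ, IsPolicy μ → ∀ ν₀ : 𝒮 → ℬ,
        (∀ s, ∀ z ∈ stdSimplex ℝ ℬ,
          (∑ a, μ s a * QpeMinus γ δ Cb r D s a (ν₀ s)) ≤
            ∑ a, ∑ b, μ s a * z b * QpeMinus γ δ Cb r D s a b) →
        ∀ s,
          (∑ a, μ s a * r s a (ν₀ s))
            + γ * (∑ s', (∑ a, μ s a * P s a (ν₀ s) s') * valQ (QpeMinus γ δ Cb r D) s')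
            - 2 * (∑ a, μ s a * penalty γ δ Cb N (cnt D s a (ν₀ s)) (Phat D s a (ν₀ s))
                (valQ (QpeMinus γ δ Cb r D)))
          ≤ valQ (QpeMinus γ δ Cb r D) s} := by
  refine (one_sub_le_dsProb_isConcentrated (Cb := Cb) hdb hP hγ₂ hγ hδ hr).trans
    (dsProb_mono hdb hP fun D hD μ hμ ν₀ hν₀ s => ?_)
  set V := valQ (QpeMinus γ δ Cb r D)
  calc _ = ∑ a, μ s a * (r s a (ν₀ s) + γ * Pexp (P s a (ν₀ s)) V
          - 2 * penalty γ δ Cb N (cnt D s a (ν₀ s)) (Phat D s a (ν₀ s)) V) := by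
        have mixture := Pexp_sum_mul (μ s) (fun a => P s a (ν₀ s)) V
        rw [Pexp] at mixture
        simp only [mixture, mul_sub, mul_add, Finset.sum_sub_distrib, Finset.sum_add_distrib,
          Finset.mul_sum, mul_left_comm]
    _ ≤ ∑ a, μ s a * QpeMinus γ δ Cb r D s a (ν₀ s) :=
        Finset.sum_le_sum fun a _ => mul_le_mul_of_nonneg_left
          (bellman_sub_two_mul_penalty_le_QpeMinus hγ₂ hγ hδ hCb hr hP hD s a (ν₀ s))
          ((hμ s).1 a)
    _ ≤ V s := le_valQ (hμ s) (hν₀ s)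

end ZSMG

open ZSMG in
/-- Lemma 4: with probability `1−δ`,
`V_pe^− ≥ r^{μ*,ν₀} + γ P^{μ*,ν₀} V_pe^− − 2 β^{μ*,ν₀}` for any minimizing
deterministic policy `ν₀` against `μ*`. -/
theorem statement8 :
    ∃ Cb : ℝ, 0 < Cb ∧
      ∀ (𝒮 𝒜 ℬ : Type) [Fintype 𝒮] [Fintype 𝒜] [Fintype ℬ]
        [DecidableEq 𝒮] [DecidableEq 𝒜] [DecidableEq ℬ]
        [Nonempty 𝒮] [Nonempty 𝒜] [Nonempty ℬ],
      ∀ γ δ : ℝ, 1 / 2 ≤ γ → γ < 1 → δ ∈ Set.Ioo (0 : ℝ) 1 →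
      ∀ P : 𝒮 → 𝒜 → ℬ → 𝒮 → ℝ, IsKernel P →
      ∀ r : 𝒮 → 𝒜 → ℬ → ℝ, IsReward r →
      ∀ db : 𝒮 → 𝒜 → ℬ → ℝ, IsDist3 db →
      ∀ (μs : 𝒮 → 𝒜 → ℝ) (νs : 𝒮 → ℬ → ℝ), IsNashPair γ P r μs νs →
      ∀ N : ℕ,
        1 - δ ≤ dsProb db P {D : Fin N → 𝒮 × 𝒜 × ℬ × 𝒮 |
          ∀ ν₀ : 𝒮 → ℬ,
            (∀ s, ∀ z ∈ stdSimplex ℝ ℬ,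
              (∑ a, μs s a * QpeMinus γ δ Cb r D s a (ν₀ s)) ≤
                ∑ a, ∑ b, μs s a * z b * QpeMinus γ δ Cb r D s a b) →
            ∀ s,
              (∑ a, μs s a * r s a (ν₀ s))
                + γ * (∑ s', (∑ a, μs s a * P s a (ν₀ s) s') *
                    valQ (QpeMinus γ δ Cb r D) s')
                - 2 * (∑ a, μs s a * penalty γ δ Cb N (cnt D s a (ν₀ s))
                    (Phat D s a (ν₀ s)) (valQ (QpeMinus γ δ Cb r D)))
              ≤ valQ (QpeMinus γ δ Cb r D) s} :=
  ⟨256, by norm_num, fun 𝒮 𝒜 ℬ _ _ _ _ _ _ _ _ _ γ δ hγ₂ hγ hδ P hP r hr db hdb μs νs hNash N =>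
    (statement8_general hγ₂ hγ hδ le_rfl hP hr hdb N).trans
      (dsProb_mono hdb hP fun _ hD => hD μs hNash.1)⟩
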